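/- arXiv:2311.07542 — 3 statements merged into one kernel-verified Lean document; each statement's English description precedes it below -/
import Mathlib

section
/- Let n ≥ 2 and let Γ ⊂ ℝⁿ satisfy condition (C) with μ_Γ⁺ < +∞. Let 0 < a < b < ∞ and α, β ∈ ℝ. Then there exists a unique function v, continuous on {a ≤ |x| ≤ b}, which is a viscosity solution of λ(A[v]) ∈ ∂Γ in the annulus {a < |x| < b} with v = α on {|x| = a} and v = β on {|x| = b}, if and only if one of the following holds: (a) β − α ∈ [−2(log b − log a), 0]; (b) β − α ∈ (−∞, −2(log b − log a)) ∪ (0, +∞) and μ_Γ⁻ < +∞. -/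
open Filter Topology MeasureTheory Metric Set
open scoped BigOperators ENNReal NNReal

noncomputable section

/-- `ℝⁿ` with the Euclidean norm. -/
abbrev Euc (n : ℕ) := EuclideanSpace ℝ (Fin n)

/-- The positive cone `Γₙ = {λ : λᵢ > 0 ∀ i}`. -/
def GammaN (n : ℕ) : Set (Fin n → ℝ) := {lam | ∀ i, 0 < lam i}

/-- Condition (C): `Γ ⊊ ℝⁿ` is a nonempty open symmetric cone with vertex at the origin
satisfying `Γ + Γₙ ⊆ Γ`. -/
def CondC {n : ℕ} (Γ : Set (Fin n → ℝ)) : Prop :=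
  Γ.Nonempty ∧ Γ ≠ Set.univ ∧ IsOpen Γ ∧
    (∀ σ : Equiv.Perm (Fin n), ∀ lam ∈ Γ, lam ∘ σ ∈ Γ) ∧
    (∀ lam ∈ Γ, ∀ t : ℝ, 0 < t → t • lam ∈ Γ) ∧
    (∀ lam ∈ Γ, ∀ mu ∈ GammaN n, lam + mu ∈ Γ)

/-- `λ* = (1, -1, …, -1)`. -/
def lamStar (n : ℕ) : Fin n → ℝ := fun i => if i.val = 0 then 1 else -1

/-- Partial derivative `∂ᵢ v (x)`. -/
def pgrad {n : ℕ} (v : Euc n → ℝ) (x : Euc n) (i : Fin n) : ℝ :=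
  fderiv ℝ v x (EuclideanSpace.single i 1)

/-- Second partial derivative `∂ᵢ∂ⱼ v (x)`. -/
def phess {n : ℕ} (v : Euc n → ℝ) (x : Euc n) (i j : Fin n) : ℝ :=
  fderiv ℝ (fun y => fderiv ℝ v y (EuclideanSpace.single j 1)) x (EuclideanSpace.single i 1)

/-- The Möbius Hessian
`A[v](x) = e^{-2v(x)} (-∇²v + ∇v ⊗ ∇v - ½ |∇v|² I)` as a matrix. -/
def mobius {n : ℕ} (v : Euc n → ℝ) (x : Euc n) : Matrix (Fin n) (Fin n) ℝ :=
  Real.exp (-2 * v x) • Matrix.of fun i j =>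
    - phess v x i j + pgrad v x i * pgrad v x j
      - (1 / 2) * (∑ k, (pgrad v x k) ^ 2) * (if i = j then (1 : ℝ) else 0)

/-- The (unordered, permutation-invariant) eigenvalue tuple of the symmetric matrix `M`
belongs to the (permutation-invariant) set `S`. -/
def EigIn {n : ℕ} (M : Matrix (Fin n) (Fin n) ℝ) (S : Set (Fin n → ℝ)) : Prop :=
  ∃ hM : M.IsHermitian, hM.eigenvalues ∈ S

/-- Viscosity supersolution of `λ(A[v]) ∈ ∂Γ` in `Ω`, i.e. `λ(A[v]) ∈ closure Γ`
in the viscosity sense (for a real-valued `v`). -/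
def Supersol {n : ℕ} (Γ : Set (Fin n → ℝ)) (Ω : Set (Euc n)) (v : Euc n → ℝ) : Prop :=
  ∀ x₀ ∈ Ω, ∀ φ : Euc n → ℝ, ContDiff ℝ 2 φ → φ x₀ = v x₀ →
    (∀ᶠ x in 𝓝[Ω] x₀, φ x ≤ v x) → EigIn (mobius φ x₀) (closure Γ)

/-- Viscosity subsolution of `λ(A[v]) ∈ ∂Γ` in `Ω`, i.e. `λ(A[v]) ∈ ℝⁿ ∖ Γ`
in the viscosity sense (for a real-valued `v`). -/
def Subsol {n : ℕ} (Γ : Set (Fin n → ℝ)) (Ω : Set (Euc n)) (v : Euc n → ℝ) : Prop :=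
  ∀ x₀ ∈ Ω, ∀ φ : Euc n → ℝ, ContDiff ℝ 2 φ → φ x₀ = v x₀ →
    (∀ᶠ x in 𝓝[Ω] x₀, v x ≤ φ x) → EigIn (mobius φ x₀) Γᶜ


/-- `μ_Γ⁻ = inf {c : (c,-1,…,-1) ∈ closure Γ} ∈ [0,∞]` (with `inf ∅ = +∞`). -/
def muMinus {n : ℕ} (Γ : Set (Fin n → ℝ)) : EReal :=
  sInf {c : EReal | ∃ r : ℝ, c = (r : EReal) ∧
    (fun i : Fin n => if i.val = 0 then r else -1) ∈ closure Γ}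

/-- `μ_Γ⁺ = sup {c : (-c,1,…,1) ∈ closure Γ} ∈ [0,∞]`. -/
def muPlus {n : ℕ} (Γ : Set (Fin n → ℝ)) : EReal :=
  sSup {c : EReal | ∃ r : ℝ, c = (r : EReal) ∧
    (fun i : Fin n => if i.val = 0 then -r else 1) ∈ closure Γ}

open Filter Topology MeasureTheory Metric Set
open scoped BigOperators ENNReal NNReal

/-- the vector `(p, q, …, q)` -/
def vec (n : ℕ) (p q : ℝ) : Fin n → ℝ := fun i => if i.val = 0 then p else q

theorem eig_abs {n : ℕ} (hn : 2 ≤ n) (u : OrthonormalBasis (Fin n) ℝ (Euc n)) (lam : Fin n → ℝ)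
    (x : Euc n) (hx : x ≠ 0) (q c : ℝ)
    (h : ∀ y : Euc n, q * ‖y‖ ^ 2 + c * (inner ℝ x y) ^ 2 ≤ ∑ i, lam i * (inner ℝ (u i) y) ^ 2) :
    ∃ i0, q + c * ‖x‖ ^ 2 ≤ lam i0 ∧ ∀ i, i ≠ i0 → q ≤ lam i := by
  have : Nonempty (Fin n) := ⟨⟨0, by omega⟩⟩
  have hxp : 0 < ‖x‖ ^ 2 := by positivity
  have hpars : ∀ y : Euc n, ∑ i, (inner ℝ (u i) y) ^ 2 = ‖y‖ ^ 2 := by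
    intro y
    rw [← OrthonormalBasis.sum_sq_norm_inner_right u y]
    exact Finset.sum_congr rfl fun i _ => by rw [Real.norm_eq_abs, sq_abs]
  have hu : ∀ i, q + c * (inner ℝ x (u i)) ^ 2 ≤ lam i := by
    intro i
    have := h (u i)
    rw [Finset.sum_eq_single i] at this
    · simpa using this
    · intro j _ hj
      rw [u.orthonormal.2 hj]; simp
    · simp
  rcases le_or_gt 0 c with hc | hc
  · obtain ⟨i0, hi0⟩ := Finite.exists_max lam
    refine ⟨i0, ?_, fun i _ => ?_⟩
    · have h1 := h x
      have h2 : ∑ i, lam i * (inner ℝ (u i) x) ^ 2 ≤ lam i0 * ‖x‖ ^ 2 := by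
        rw [← hpars x, Finset.mul_sum]
        exact Finset.sum_le_sum fun i _ => mul_le_mul_of_nonneg_right (hi0 i) (sq_nonneg _)
      rw [real_inner_self_eq_norm_sq] at h1
      nlinarith
    · nlinarith [hu i, mul_nonneg hc (sq_nonneg (inner ℝ x (u i)))]
  · obtain ⟨i0, hi0⟩ := Finite.exists_min lam
    refine ⟨i0, ?_, fun i hi => ?_⟩
    · have h1 := hu i0
      have h2 : (inner ℝ x (u i0)) ^ 2 ≤ ‖x‖ ^ 2 := by
        have := abs_real_inner_le_norm x (u i0)
        rw [u.orthonormal.1 i0, mul_one] at this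
        rw [← sq_abs (inner ℝ x (u i0))]
        gcongr
      nlinarith
    · by_cases h0 : (inner ℝ x (u i)) = 0
      · have := hu i
        rw [h0] at this; simpa using this
      · set s := inner ℝ x (u i) with hs
        set r := inner ℝ x (u i0) with hr
        have h1 := h (s • u i0 - r • u i)
        have e1 : inner ℝ x (s • u i0 - r • u i) = 0 := by
          rw [inner_sub_right, inner_smul_right, inner_smul_right, ← hs, ← hr]; ring
        have hco : ∀ j, inner ℝ (u j) (s • u i0 - r • u i) =
            s * (if j = i0 then 1 else 0) - r * (if j = i then 1 else 0) := by
          intro j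
          rw [inner_sub_right, inner_smul_right, inner_smul_right,
            orthonormal_iff_ite.1 u.orthonormal, orthonormal_iff_ite.1 u.orthonormal]
        have e2 : ‖s • u i0 - r • u i‖ ^ 2 = s ^ 2 + r ^ 2 := by
          rw [← hpars]
          simp_rw [hco]
          rw [← Finset.sum_subset (Finset.subset_univ {i0, i})]
          · rw [Finset.sum_pair hi.symm]; simp [hi, hi.symm]
          · intro j _ hj
            simp only [Finset.mem_insert, Finset.mem_singleton, not_or] at hj
            simp [hj.1, hj.2]
        have e3 : ∑ j, lam j * (inner ℝ (u j) (s • u i0 - r • u i)) ^ 2 =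
            lam i0 * s ^ 2 + lam i * r ^ 2 := by
          simp_rw [hco]
          rw [← Finset.sum_subset (Finset.subset_univ {i0, i})]
          · rw [Finset.sum_pair hi.symm]; simp [hi, hi.symm]
          · intro j _ hj
            simp only [Finset.mem_insert, Finset.mem_singleton, not_or] at hj
            simp [hj.1, hj.2]
        rw [e1, e2, e3] at h1
        have hs2 : 0 < s ^ 2 := by positivity
        have := mul_le_mul_of_nonneg_right (hi0 i) hs2.le
        by_contra hlt
        push Not at hlt
        nlinarith [sq_nonneg r]

theorem quad_eq {n : ℕ} {M : Matrix (Fin n) (Fin n) ℝ} (hM : M.IsHermitian) (y : Euc n) :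
    ∑ i, ∑ j, M i j * y i * y j =
      ∑ i, hM.eigenvalues i * (inner ℝ (hM.eigenvectorBasis i) y) ^ 2 := by
  have hdot : ∀ a b : Euc n, inner ℝ a b = ∑ i, a i * b i := by
    intro a b
    simp [PiLp.inner_apply, mul_comm]
  have hMs : ∀ i j, M i j = M j i := fun i j => by
    have := hM.apply i j; simpa using this.symm
  let My : Euc n := WithLp.toLp 2 (M.mulVec y)
  have h1 : ∑ i, ∑ j, M i j * y i * y j = inner ℝ y My := by
    rw [hdot]
    refine Finset.sum_congr rfl fun i _ => ?_
    simp only [My, Matrix.mulVec, dotProduct, Finset.mul_sum]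
    exact Finset.sum_congr rfl fun j _ => by ring
  rw [h1, ← OrthonormalBasis.sum_inner_mul_inner hM.eigenvectorBasis y My]
  refine Finset.sum_congr rfl fun i _ => ?_
  have h2 : inner ℝ (hM.eigenvectorBasis i) My =
      hM.eigenvalues i * inner ℝ (hM.eigenvectorBasis i) y := by
    have h3 := hM.mulVec_eigenvectorBasis i
    have h4 : ∀ k, ∑ j, M k j * hM.eigenvectorBasis i j =
        hM.eigenvalues i * hM.eigenvectorBasis i k := by
      intro k
      have := congrFun h3 k
      simpa [Matrix.mulVec, dotProduct] using this
    rw [hdot, hdot, Finset.mul_sum]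
    simp only [My, Matrix.mulVec, dotProduct, Finset.mul_sum]
    rw [Finset.sum_comm]
    refine Finset.sum_congr rfl fun j _ => ?_
    rw [← mul_assoc, ← h4 j, Finset.sum_mul]
    exact Finset.sum_congr rfl fun k _ => by rw [hMs k j]; ring
  rw [h2, real_inner_comm]
  ring

/-- symmetric and upward closed -/
def SymUp {n : ℕ} (S : Set (Fin n → ℝ)) : Prop :=
  (∀ σ : Equiv.Perm (Fin n), ∀ lam ∈ S, lam ∘ σ ∈ S) ∧ (∀ lam ∈ S, ∀ mu, lam ≤ mu → mu ∈ S)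

theorem eig_up {n : ℕ} (hn : 2 ≤ n) {S : Set (Fin n → ℝ)} (hS : SymUp S)
    {M : Matrix (Fin n) (Fin n) ℝ} (hM : M.IsHermitian)
    (x : Euc n) (hx : x ≠ 0) (q c : ℝ)
    (h : ∀ y : Euc n, q * ‖y‖ ^ 2 + c * (inner ℝ x y) ^ 2 ≤ ∑ i, ∑ j, M i j * y i * y j)
    (hv : vec n (q + c * ‖x‖ ^ 2) q ∈ S) : hM.eigenvalues ∈ S := by
  obtain ⟨i0, h1, h2⟩ := eig_abs hn hM.eigenvectorBasis hM.eigenvalues x hx q c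
    (fun y => by rw [← quad_eq]; exact h y)
  refine hS.2 _ (hS.1 (Equiv.swap i0 ⟨0, by omega⟩) _ hv) _ fun i => ?_
  by_cases hi : i = i0
  · subst hi; simpa [vec] using h1
  · have h3 : (Equiv.swap i0 ⟨0, by omega⟩ i).val ≠ 0 := by
      intro h0
      apply hi
      have : Equiv.swap i0 ⟨0, by omega⟩ i = ⟨0, by omega⟩ := Fin.ext h0
      rwa [Equiv.swap_apply_eq_iff, Equiv.swap_apply_right] at this
    simp only [Function.comp, vec, if_neg h3]
    exact h2 i hi

theorem eig_down {n : ℕ} (hn : 2 ≤ n) {S : Set (Fin n → ℝ)} (hS : SymUp S)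
    {M : Matrix (Fin n) (Fin n) ℝ} (hM : M.IsHermitian)
    (x : Euc n) (hx : x ≠ 0) (q c : ℝ)
    (h : ∀ y : Euc n, ∑ i, ∑ j, M i j * y i * y j ≤ q * ‖y‖ ^ 2 + c * (inner ℝ x y) ^ 2)
    (hv : hM.eigenvalues ∈ S) : vec n (q + c * ‖x‖ ^ 2) q ∈ S := by
  obtain ⟨i0, h1, h2⟩ := eig_abs hn hM.eigenvectorBasis (fun i => - hM.eigenvalues i) x hx (-q) (-c)
    (fun y => by
      have := h y
      rw [quad_eq hM] at this
      simp only [neg_mul, Finset.sum_neg_distrib]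
      linarith)
  refine hS.2 _ (hS.1 (Equiv.swap i0 ⟨0, by omega⟩) _ hv) _ fun i => ?_
  by_cases hi : i.val = 0
  · have h4 : Equiv.swap i0 ⟨0, by omega⟩ i = i0 := by
      rw [Equiv.swap_apply_eq_iff, Equiv.swap_apply_left]; exact Fin.ext hi
    simp only [Function.comp, vec, if_pos hi, h4]
    linarith
  · have h3 : Equiv.swap i0 ⟨0, by omega⟩ i ≠ i0 := by
      intro h0
      apply hi
      rw [Equiv.swap_apply_eq_iff, Equiv.swap_apply_left] at h0
      rw [h0]
    simp only [Function.comp, vec, if_neg hi]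
    linarith [h2 _ h3]

/-! cone lemmas -/

theorem condC_zero {n : ℕ} {Γ : Set (Fin n → ℝ)} (hΓ : CondC Γ) : (0 : Fin n → ℝ) ∉ Γ := by
  obtain ⟨hne, huniv, hop, hsym, hcone, hadd⟩ := hΓ
  intro h0
  apply huniv
  rw [Set.eq_univ_iff_forall]
  intro x
  have ht : Tendsto (fun t : ℝ => t • x) (𝓝[>] 0) (𝓝 0) := by
    have : Tendsto (fun t : ℝ => t • x) (𝓝 0) (𝓝 ((0 : ℝ) • x)) :=
      (continuous_id.smul continuous_const).tendsto 0
    rw [zero_smul] at this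
    exact this.mono_left nhdsWithin_le_nhds
  have h1 := ht.eventually (hop.mem_nhds h0)
  obtain ⟨t, ht1, ht2⟩ := (h1.and self_mem_nhdsWithin).exists
  have := hcone _ ht1 t⁻¹ (inv_pos.2 ht2)
  rwa [smul_smul, inv_mul_cancel₀ (ne_of_gt ht2), one_smul] at this

theorem closure_add {n : ℕ} {Γ : Set (Fin n → ℝ)} (hΓ : CondC Γ) {lam mu : Fin n → ℝ}
    (hl : lam ∈ closure Γ) (hm : ∀ i, lam i < mu i) : mu ∈ Γ := by
  obtain ⟨hne, huniv, hop, hsym, hcone, hadd⟩ := hΓ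
  have hU : IsOpen {z : Fin n → ℝ | ∀ i, z i < mu i} := by
    simp only [ofPred_forall]
    exact isOpen_iInter_of_finite fun i => isOpen_lt (continuous_apply i) continuous_const
  obtain ⟨z, hz1, hz2⟩ := mem_closure_iff.1 hl _ hU hm
  have := hadd z hz2 (mu - z) (fun i => by simpa using hz1 i)
  simpa using this

theorem symUp_closure {n : ℕ} {Γ : Set (Fin n → ℝ)} (hΓ : CondC Γ) : SymUp (closure Γ) := by
  refine ⟨fun σ lam hl => ?_, fun lam hl mu hle => ?_⟩
  · have hc : Continuous (fun z : Fin n → ℝ => z ∘ σ) := by fun_prop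
    exact map_mem_closure (f := fun z : Fin n → ℝ => z ∘ σ) hc hl (fun z hz => hΓ.2.2.2.1 σ z hz)
  · have ht : Tendsto (fun t : ℝ => mu + t • (1 : Fin n → ℝ)) (𝓝[>] 0) (𝓝 mu) := by
      have : Tendsto (fun t : ℝ => mu + t • (1 : Fin n → ℝ)) (𝓝 0)
          (𝓝 (mu + (0 : ℝ) • (1 : Fin n → ℝ))) := by
        apply Continuous.tendsto; fun_prop
      rw [zero_smul, add_zero] at this
      exact this.mono_left nhdsWithin_le_nhds
    refine mem_closure_of_tendsto ht ?_
    filter_upwards [self_mem_nhdsWithin] with t ht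
    refine closure_add hΓ hl fun i => ?_
    have := hle i
    have h2 : 0 < t := ht
    simp; linarith

theorem symUp_self {n : ℕ} {Γ : Set (Fin n → ℝ)} (hΓ : CondC Γ) : SymUp Γ := by
  refine ⟨hΓ.2.2.2.1, fun lam hl mu hle => ?_⟩
  have ht : Tendsto (fun t : ℝ => lam - t • (1 : Fin n → ℝ)) (𝓝[>] 0) (𝓝 lam) := by
    have : Tendsto (fun t : ℝ => lam - t • (1 : Fin n → ℝ)) (𝓝 0)
        (𝓝 (lam - (0 : ℝ) • (1 : Fin n → ℝ))) := by
      apply Continuous.tendsto; fun_prop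
    rw [zero_smul, sub_zero] at this
    exact this.mono_left nhdsWithin_le_nhds
  obtain ⟨t, ht1, ht2⟩ := ((ht.eventually (hΓ.2.2.1.mem_nhds hl)).and self_mem_nhdsWithin).exists
  refine closure_add hΓ (subset_closure ht1) fun i => ?_
  have := hle i
  have h2 : 0 < t := ht2
  simp; linarith

theorem cone_closure {n : ℕ} {Γ : Set (Fin n → ℝ)} (hΓ : CondC Γ) {lam : Fin n → ℝ}
    (hl : lam ∈ closure Γ) {t : ℝ} (ht : 0 < t) : t • lam ∈ closure Γ := by
  have hc : Continuous (fun z : Fin n → ℝ => t • z) := by fun_prop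
  exact map_mem_closure hc hl (fun z hz => hΓ.2.2.2.2.1 z hz t ht)

theorem cone_closure_iff {n : ℕ} {Γ : Set (Fin n → ℝ)} (hΓ : CondC Γ) {lam : Fin n → ℝ}
    {t : ℝ} (ht : 0 < t) : t • lam ∈ closure Γ ↔ lam ∈ closure Γ := by
  refine ⟨fun h => ?_, fun h => cone_closure hΓ h ht⟩
  have := cone_closure hΓ h (inv_pos.2 ht)
  rwa [smul_smul, inv_mul_cancel₀ ht.ne', one_smul] at this

theorem cone_iff {n : ℕ} {Γ : Set (Fin n → ℝ)} (hΓ : CondC Γ) {lam : Fin n → ℝ}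
    {t : ℝ} (ht : 0 < t) : t • lam ∈ Γ ↔ lam ∈ Γ := by
  refine ⟨fun h => ?_, fun h => hΓ.2.2.2.2.1 _ h t ht⟩
  have := hΓ.2.2.2.2.1 _ h _ (inv_pos.2 ht)
  rwa [smul_smul, inv_mul_cancel₀ ht.ne', one_smul] at this

theorem smul_vec {n : ℕ} (t p q : ℝ) : t • vec n p q = vec n (t * p) (t * q) := by
  funext i; simp only [vec, Pi.smul_apply, smul_eq_mul]; split_ifs <;> rfl

theorem pos_mem {n : ℕ} {Γ : Set (Fin n → ℝ)} (hΓ : CondC Γ) {mu : Fin n → ℝ}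
    (hmu : ∀ i, 0 < mu i) : mu ∈ Γ := by
  obtain ⟨l, hl⟩ := hΓ.1
  have h0 : (0 : Fin n → ℝ) ∈ closure Γ := by
    have ht : Tendsto (fun t : ℝ => t • l) (𝓝[>] 0) (𝓝 0) := by
      have : Tendsto (fun t : ℝ => t • l) (𝓝 0) (𝓝 ((0 : ℝ) • l)) :=
        (continuous_id.smul continuous_const).tendsto 0
      rw [zero_smul] at this
      exact this.mono_left nhdsWithin_le_nhds
    refine mem_closure_of_tendsto ht ?_
    filter_upwards [self_mem_nhdsWithin] with t ht
    exact hΓ.2.2.2.2.1 l hl t ht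
  exact closure_add hΓ h0 hmu

theorem zero_mem_closure {n : ℕ} {Γ : Set (Fin n → ℝ)} (hΓ : CondC Γ) :
    (0 : Fin n → ℝ) ∈ closure Γ := by
  have ht : Tendsto (fun t : ℝ => t • (1 : Fin n → ℝ)) (𝓝[>] 0) (𝓝 0) := by
    have : Tendsto (fun t : ℝ => t • (1 : Fin n → ℝ)) (𝓝 0) (𝓝 ((0 : ℝ) • 1)) :=
      (continuous_id.smul continuous_const).tendsto 0
    rw [zero_smul] at this
    exact this.mono_left nhdsWithin_le_nhds
  refine mem_closure_of_tendsto ht ?_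
  filter_upwards [self_mem_nhdsWithin] with t ht
  exact pos_mem hΓ fun i => by simpa using ht

theorem continuous_vec {n : ℕ} : Continuous (fun z : ℝ × ℝ => vec n z.1 z.2) := by
  refine continuous_pi fun i => ?_
  by_cases h : i.val = 0
  · simp only [vec, h, if_true]; fun_prop
  · simp only [vec, h, if_false]; fun_prop

/-- one-sided data for `μ⁺` -/
theorem muPlus_data {n : ℕ} {Γ : Set (Fin n → ℝ)} (hΓ : CondC Γ) (hmu : muPlus Γ ≠ ⊤) :
    ∃ m : ℝ, vec n (-m) 1 ∈ closure Γ ∧ vec n (-m) 1 ∉ Γ ∧ (∀ c < m, vec n (-c) 1 ∈ Γ) ∧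
      (∀ c > m, vec n (-c) 1 ∉ closure Γ) := by
  set T : Set ℝ := {r | vec n (-r) 1 ∈ closure Γ} with hT
  have h0T : (-1 : ℝ) ∈ T := subset_closure (pos_mem hΓ fun i => by
    simp only [vec]; split_ifs <;> norm_num)
  have hbdd : BddAbove T := by
    obtain ⟨B, hB⟩ : ∃ B : ℝ, muPlus Γ ≤ B := by
      induction h : muPlus Γ with
      | bot => exact ⟨0, bot_le⟩
      | top => exact absurd h hmu
      | coe r => exact ⟨r, le_rfl⟩
    refine ⟨B, fun r hr => ?_⟩
    have : (r : EReal) ≤ muPlus Γ := le_sSup ⟨r, rfl, hr⟩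
    exact_mod_cast this.trans hB
  have hcl : IsClosed T := isClosed_closure.preimage
    (continuous_vec.comp ((continuous_neg).prodMk continuous_const))
  set m := sSup T
  have hm : m ∈ T := hcl.csSup_mem ⟨_, h0T⟩ hbdd
  have hm1 : -1 ≤ m := le_csSup hbdd h0T
  have hm2 : -1 < m := by
    have : (-(1/2) : ℝ) ∈ T := subset_closure (pos_mem hΓ fun i => by
      simp only [vec]; split_ifs <;> norm_num)
    have := le_csSup hbdd this
    linarith
  have hgt : ∀ c > m, vec n (-c) 1 ∉ closure Γ := fun c hc hcT =>
    absurd (le_csSup hbdd hcT) (not_le.2 hc)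
  refine ⟨m, hm, fun hmΓ => ?_, fun c hc => ?_, hgt⟩
  · have hcont : Continuous (fun c : ℝ => vec n (-c) 1) :=
      continuous_vec.comp ((continuous_neg).prodMk continuous_const)
    have h1 : ∀ᶠ c in 𝓝[>] m, vec n (-c) 1 ∈ Γ :=
      (hcont.continuousAt.eventually (hΓ.2.2.1.mem_nhds hmΓ)).filter_mono nhdsWithin_le_nhds
    obtain ⟨c, hc1, hc2⟩ := (h1.and self_mem_nhdsWithin).exists
    exact hgt c hc2 (subset_closure hc1)
  ·
    obtain ⟨d, hd0, hd⟩ : ∃ d > 0, -m < (1 + d) * (-c) := by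
      have hmc : 0 < m - c := sub_pos.2 hc
      refine ⟨(m - c) / (2 * (|c| + 1)), by positivity, ?_⟩
      have h3 : (m - c) / (2 * (|c| + 1)) * c ≤ (m - c) / 2 := by
        rw [div_mul_eq_mul_div, div_le_div_iff₀ (by positivity) (by norm_num)]
        nlinarith [le_abs_self c, abs_nonneg c]
      nlinarith
    have h1d : 0 < 1 + d := by linarith
    rw [← cone_iff hΓ h1d, smul_vec]
    refine closure_add hΓ hm fun i => ?_
    simp only [vec]; split_ifs
    · exact hd
    · linarith

theorem muMinus_data {n : ℕ} {Γ : Set (Fin n → ℝ)} (hΓ : CondC Γ)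
    (hmu : muMinus Γ < ⊤) :
    ∃ m : ℝ, vec n m (-1) ∈ closure Γ ∧ vec n m (-1) ∉ Γ ∧ (∀ c > m, vec n c (-1) ∈ Γ) ∧
      (∀ c < m, vec n c (-1) ∉ closure Γ) := by
  set T : Set ℝ := {r | vec n r (-1) ∈ closure Γ} with hT
  obtain ⟨r0, h0T⟩ : T.Nonempty := by
    by_contra hne
    rw [Set.not_nonempty_iff_eq_empty] at hne
    have : muMinus Γ = ⊤ := by
      unfold muMinus
      rw [sInf_eq_top]
      rintro c ⟨r, rfl, hr⟩
      have : r ∈ T := hr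
      rw [hne] at this; exact absurd this (Set.notMem_empty _)
    exact absurd hmu (by rw [this]; exact lt_irrefl _)
  have hge : ∀ r ∈ T, 0 ≤ r := by
    intro r hr
    by_contra hneg
    push Not at hneg
    refine condC_zero hΓ (closure_add hΓ hr fun i => ?_)
    simp only [vec, Pi.zero_apply]; split_ifs <;> linarith
  have hbdd : BddBelow T := ⟨0, hge⟩
  have hcl : IsClosed T := isClosed_closure.preimage
    (continuous_vec.comp (continuous_id.prodMk continuous_const))
  set m := sInf T
  have hm : m ∈ T := hcl.csInf_mem ⟨_, h0T⟩ hbdd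
  have hm1 : 0 ≤ m := hge m hm
  have hlt : ∀ c < m, vec n c (-1) ∉ closure Γ := fun c hc hcT =>
    absurd (csInf_le hbdd hcT) (not_le.2 hc)
  refine ⟨m, hm, fun hmΓ => ?_, fun c hc => ?_, hlt⟩
  · have hcont : Continuous (fun c : ℝ => vec n c (-1)) :=
      continuous_vec.comp (continuous_id.prodMk continuous_const)
    have h1 : ∀ᶠ c in 𝓝[<] m, vec n c (-1) ∈ Γ :=
      (hcont.continuousAt.eventually (hΓ.2.2.1.mem_nhds hmΓ)).filter_mono nhdsWithin_le_nhds
    obtain ⟨c, hc1, hc2⟩ := (h1.and self_mem_nhdsWithin).exists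
    exact hlt c hc2 (subset_closure hc1)
  · obtain ⟨d, hd0, hd1, hd⟩ : ∃ d > 0, d < 1 ∧ m < (1 - d) * c := by
      have hc0 : 0 < c := lt_of_le_of_lt hm1 hc
      refine ⟨(c - m) / (2 * c), div_pos (by linarith) (by linarith), ?_, ?_⟩
      · rw [div_lt_one (by linarith)]; linarith
      · have : (c - m) / (2 * c) * c = (c - m) / 2 := by field_simp
        nlinarith
    have h1d : 0 < 1 - d := by linarith
    rw [← cone_iff hΓ h1d, smul_vec]
    refine closure_add hΓ hm fun i => ?_
    simp only [vec]; split_ifs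
    · exact hd
    · linarith

theorem muMinus_top {n : ℕ} {Γ : Set (Fin n → ℝ)} (hΓ : CondC Γ) (hmu : ¬ muMinus Γ < ⊤)
    (p q : ℝ) (hq : q < 0) : vec n p q ∉ closure Γ := by
  intro h
  apply hmu
  have h1 : vec n (p / -q) (-1) ∈ closure Γ := by
    have := cone_closure hΓ h (t := 1 / -q) (by apply div_pos one_pos; linarith)
    rw [smul_vec] at this
    convert this using 2
    · ring
    · have : q ≠ 0 := hq.ne
      field_simp
  refine lt_of_le_of_lt (sInf_le ⟨_, rfl, h1⟩) (EReal.coe_lt_top _)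

theorem snd_deriv_nonneg {f f1 : ℝ → ℝ} {d : ℝ} (hmin : IsLocalMin f 0)
    (h1 : ∀ᶠ t in 𝓝 (0 : ℝ), HasDerivAt f (f1 t) t) (h2 : HasDerivAt f1 d 0) :
    f1 0 = 0 ∧ 0 ≤ d := by
  have h0 : f1 0 = 0 := hmin.hasDerivAt_eq_zero h1.self_of_nhds
  refine ⟨h0, ?_⟩
  by_contra hd
  push Not at hd
  have hde : deriv f =ᶠ[𝓝 0] f1 := h1.mono fun t ht => ht.deriv
  have hdd : deriv (deriv f) 0 = d := by rw [hde.deriv_eq]; exact h2.deriv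
  have hmax := isLocalMax_of_deriv_deriv_neg (f := f) (x₀ := 0) (by rw [hdd]; exact hd)
    (by rw [hde.self_of_nhds, h0]) h1.self_of_nhds.continuousAt
  have hc : f =ᶠ[𝓝 0] fun _ => f 0 := by
    filter_upwards [hmin, hmax] with t h3 h4 using le_antisymm h4 h3
  have : deriv f =ᶠ[𝓝 0] fun _ => 0 := by
    refine hc.deriv.trans ?_
    exact Eventually.of_forall fun t => by simp
  have h5 := this.deriv_eq
  rw [hdd] at h5
  simp at h5
  exact absurd h5 hd.ne

theorem euc_sum {n : ℕ} (y : Euc n) : y = ∑ i, y i • (EuclideanSpace.single i (1 : ℝ) : Euc n) := by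
  ext j
  simp [Finset.sum_apply, Pi.single_apply]

theorem fderiv_eq_sum {n : ℕ} (φ : Euc n → ℝ) (x y : Euc n) :
    fderiv ℝ φ x y = ∑ i, pgrad φ x i * y i := by
  conv_lhs => rw [euc_sum y]
  simp [pgrad, map_sum, mul_comm]

theorem diff_fderiv {n : ℕ} {φ : Euc n → ℝ} {x : Euc n} (h : ContDiffAt ℝ 2 φ x) :
    DifferentiableAt ℝ (fderiv ℝ φ) x :=
  (h.fderiv_right (m := 1) (by norm_num)).differentiableAt (by norm_num)

theorem phess_eq {n : ℕ} {φ : Euc n → ℝ} {x : Euc n} (h : ContDiffAt ℝ 2 φ x) (i j : Fin n) :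
    phess φ x i j = fderiv ℝ (fderiv ℝ φ) x (EuclideanSpace.single i 1)
      (EuclideanSpace.single j 1) := by
  unfold phess
  rw [fderiv_clm_apply (diff_fderiv h) (by fun_prop)]
  simp

theorem phess_sum {n : ℕ} {φ : Euc n → ℝ} {x : Euc n} (h : ContDiffAt ℝ 2 φ x) (y : Euc n) :
    fderiv ℝ (fderiv ℝ φ) x y y = ∑ i, ∑ j, phess φ x i j * y i * y j := by
  conv_lhs => rw [euc_sum y]
  simp only [map_sum, map_smul, sum_apply, smul_apply,
    smul_eq_mul]
  rw [Finset.sum_comm]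
  simp only [phess_eq h, Finset.mul_sum]
  refine Finset.sum_congr rfl fun i _ => Finset.sum_congr rfl fun j _ => by ring

theorem mobius_herm {n : ℕ} {φ : Euc n → ℝ} {x : Euc n} (h : ContDiffAt ℝ 2 φ x) :
    (mobius φ x).IsHermitian := by
  have hs := h.isSymmSndFDerivAt (by simp)
  refine Matrix.IsHermitian.ext fun i j => ?_
  simp only [mobius, Matrix.smul_apply, Matrix.of_apply, star_trivial, phess_eq h]
  rw [hs (EuclideanSpace.single i 1) (EuclideanSpace.single j 1)]
  by_cases hij : i = j
  · subst hij; rfl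
  · have hji : ¬ j = i := fun h => hij h.symm
    simp only [hij, hji, if_false]; ring_nf

theorem touch {n : ℕ} {φ ψ : Euc n → ℝ} {x : Euc n} (hφ : ContDiffAt ℝ 2 φ x)
    (hψ : ContDiffAt ℝ 2 ψ x) (heq : φ x = ψ x) (hle : ∀ᶠ y in 𝓝 x, φ y ≤ ψ y) :
    (∀ i, pgrad φ x i = pgrad ψ x i) ∧
    ∀ y : Euc n, ∑ i, ∑ j, phess φ x i j * y i * y j ≤ ∑ i, ∑ j, phess ψ x i j * y i * y j := by
  have key : ∀ y : Euc n, fderiv ℝ ψ x y - fderiv ℝ φ x y = 0 ∧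
      0 ≤ fderiv ℝ (fderiv ℝ ψ) x y y - fderiv ℝ (fderiv ℝ φ) x y y := by
    intro y
    have hline : ∀ t : ℝ, HasDerivAt (fun t : ℝ => x + t • y) y t := by
      intro t
      simpa using ((hasDerivAt_id t).smul_const y).const_add x
    have hx0 : x + (0 : ℝ) • y = x := by simp
    have htend : Tendsto (fun t : ℝ => x + t • y) (𝓝 0) (𝓝 x) := by
      have := (hline 0).continuousAt.tendsto
      rwa [hx0] at this
    have one : ∀ χ : Euc n → ℝ, ContDiffAt ℝ 2 χ x →
        (∀ᶠ t in 𝓝 (0 : ℝ), HasDerivAt (fun t : ℝ => χ (x + t • y))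
          (fderiv ℝ χ (x + t • y) y) t) ∧
        HasDerivAt (fun t : ℝ => fderiv ℝ χ (x + t • y) y) (fderiv ℝ (fderiv ℝ χ) x y y) 0 := by
      intro χ hχ
      constructor
      · have h1 : ∀ᶠ z in 𝓝 x, ContDiffAt ℝ 2 χ z := hχ.eventually (by simp)
        filter_upwards [htend.eventually h1] with t ht
        exact (ht.differentiableAt (by norm_num)).hasFDerivAt.comp_hasDerivAt t (hline t)
      · have h2 : HasFDerivAt (fderiv ℝ χ) (fderiv ℝ (fderiv ℝ χ) x) (x + (0 : ℝ) • y) := by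
          rw [hx0]; exact (diff_fderiv hχ).hasFDerivAt
        have h3 := h2.comp_hasDerivAt (0 : ℝ) (hline 0)
        have h4 := h3.clm_apply (hasDerivAt_const (0 : ℝ) y)
        simpa using h4
    obtain ⟨a1, a2⟩ := one φ hφ
    obtain ⟨b1, b2⟩ := one ψ hψ
    have hmin : IsLocalMin (fun t : ℝ => ψ (x + t • y) - φ (x + t • y)) 0 := by
      filter_upwards [htend.eventually hle] with t ht
      simp only [zero_smul, add_zero, heq, sub_self]
      linarith
    have := snd_deriv_nonneg hmin (a1.mp (b1.mono fun t h1 h2 => h1.sub h2)) (b2.sub a2)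
    simpa using this
  refine ⟨fun i => ?_, fun y => ?_⟩
  · have := (key (EuclideanSpace.single i 1)).1
    unfold pgrad; linarith
  · have := (key y).2
    rw [phess_sum hψ, phess_sum hφ] at this
    linarith

theorem mobius_quad {n : ℕ} (φ : Euc n → ℝ) (x y : Euc n) :
    ∑ i, ∑ j, mobius φ x i j * y i * y j = Real.exp (-2 * φ x) *
      (-(∑ i, ∑ j, phess φ x i j * y i * y j) + (∑ i, pgrad φ x i * y i) ^ 2
        - 1 / 2 * (∑ k, (pgrad φ x k) ^ 2) * ‖y‖ ^ 2) := by
  have h1 : ‖y‖ ^ 2 = ∑ i, ∑ j, (if i = j then (1 : ℝ) else 0) * y i * y j := by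
    rw [EuclideanSpace.real_norm_sq_eq]
    refine Finset.sum_congr rfl fun i _ => ?_
    simp [sq]
  rw [h1, sq (∑ i, pgrad φ x i * y i), Finset.sum_mul_sum]
  simp only [← Finset.sum_neg_distrib, Finset.mul_sum, ← Finset.sum_add_distrib,
    ← Finset.sum_sub_distrib]
  refine Finset.sum_congr rfl fun i _ => Finset.sum_congr rfl fun j _ => ?_
  simp only [mobius, Matrix.smul_apply, Matrix.of_apply, smul_eq_mul, Finset.mul_sum]
  ring

theorem mobius_mono {n : ℕ} {φ ψ : Euc n → ℝ} {x : Euc n} (hφ : ContDiffAt ℝ 2 φ x)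
    (hψ : ContDiffAt ℝ 2 ψ x) (heq : φ x = ψ x) (hle : ∀ᶠ y in 𝓝 x, φ y ≤ ψ y) (y : Euc n) :
    ∑ i, ∑ j, mobius ψ x i j * y i * y j ≤ ∑ i, ∑ j, mobius φ x i j * y i * y j := by
  obtain ⟨h1, h2⟩ := touch hφ hψ heq hle
  rw [mobius_quad, mobius_quad, heq]
  simp only [h1]
  have := h2 y
  have he := Real.exp_pos (-2 * ψ x)
  apply mul_le_mul_of_nonneg_left _ he.le
  linarith

theorem mobius_congr {n : ℕ} {φ ψ : Euc n → ℝ} {x : Euc n} (h : φ =ᶠ[𝓝 x] ψ) :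
    mobius φ x = mobius ψ x := by
  have h1 : ∀ i, pgrad φ x i = pgrad ψ x i := fun i => by
    unfold pgrad; rw [h.fderiv_eq]
  have h2 : ∀ i j, phess φ x i j = phess ψ x i j := fun i j => by
    unfold phess
    have : (fun y => fderiv ℝ φ y (EuclideanSpace.single j 1)) =ᶠ[𝓝 x]
        (fun y => fderiv ℝ ψ y (EuclideanSpace.single j 1)) := by
      filter_upwards [h.fderiv (𝕜 := ℝ)] with y hy
      rw [hy]
    rw [this.fderiv_eq]
  simp only [mobius, h1, h2, h.self_of_nhds]

theorem globalize {n : ℕ} {φ : Euc n → ℝ} {x : Euc n} (hφ : ContDiffAt ℝ 2 φ x) :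
    ∃ ψ : Euc n → ℝ, ContDiff ℝ 2 ψ ∧ ψ =ᶠ[𝓝 x] φ := by
  have h1 : ∀ᶠ z in 𝓝 x, ContDiffAt ℝ 2 φ z := hφ.eventually (by simp)
  obtain ⟨r, hr, hball⟩ := Metric.eventually_nhds_iff_ball.1 h1
  let f : ContDiffBump x := ⟨r / 4, r / 2, by positivity, by linarith⟩
  refine ⟨fun y => f y * φ y, ?_, ?_⟩
  · rw [contDiff_iff_contDiffAt]
    intro y
    by_cases hy : y ∈ ball x r
    · exact f.contDiffAt.mul (hball y hy)
    · have h2 : y ∉ tsupport f := by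
        rw [f.tsupport_eq]
        simp only [mem_closedBall, mem_ball, not_lt, not_le] at hy ⊢
        change r / 2 < _
        linarith
      have h3 : (fun y => f y * φ y) =ᶠ[𝓝 y] fun _ => 0 := by
        filter_upwards [notMem_tsupport_iff_eventuallyEq.1 h2] with z hz
        simp [hz]
      exact contDiffAt_const.congr_of_eventuallyEq h3
  · filter_upwards [f.eventuallyEq_one] with z hz
    simp [hz]

theorem supersol_use {n : ℕ} {Γ : Set (Fin n → ℝ)} {Ω : Set (Euc n)} (hΩ : IsOpen Ω)
    {v : Euc n → ℝ} (h : Supersol Γ Ω v) {x : Euc n} (hx : x ∈ Ω) {φ : Euc n → ℝ}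
    (hφ : ContDiffAt ℝ 2 φ x) (heq : φ x = v x) (hle : ∀ᶠ y in 𝓝 x, φ y ≤ v y) :
    EigIn (mobius φ x) (closure Γ) := by
  obtain ⟨ψ, h1, h2⟩ := globalize hφ
  rw [← mobius_congr h2]
  refine h x hx ψ h1 (by rw [h2.self_of_nhds, heq]) ?_
  rw [hΩ.nhdsWithin_eq hx]
  filter_upwards [h2, hle] with y h3 h4
  rw [h3]; exact h4

theorem subsol_use {n : ℕ} {Γ : Set (Fin n → ℝ)} {Ω : Set (Euc n)} (hΩ : IsOpen Ω)
    {v : Euc n → ℝ} (h : Subsol Γ Ω v) {x : Euc n} (hx : x ∈ Ω) {φ : Euc n → ℝ}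
    (hφ : ContDiffAt ℝ 2 φ x) (heq : φ x = v x) (hle : ∀ᶠ y in 𝓝 x, v y ≤ φ y) :
    EigIn (mobius φ x) Γᶜ := by
  obtain ⟨ψ, h1, h2⟩ := globalize hφ
  rw [← mobius_congr h2]
  refine h x hx ψ h1 (by rw [h2.self_of_nhds, heq]) ?_
  rw [hΩ.nhdsWithin_eq hx]
  filter_upwards [h2, hle] with y h3 h4
  rw [h3]; exact h4

/-- radial function -/
def rad {n : ℕ} (g : ℝ → ℝ) (x : Euc n) : ℝ := g (Real.log ‖x‖)

theorem log_norm_deriv {n : ℕ} {x : Euc n} (hx : x ≠ 0) :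
    HasFDerivAt (fun y : Euc n => Real.log ‖y‖) ((‖x‖ ^ 2)⁻¹ • innerSL ℝ x) x := by
  have hp : ‖x‖ ^ 2 ≠ 0 := by positivity
  have h1 := ((hasStrictFDerivAt_norm_sq x).hasFDerivAt.log hp).const_mul (1 / 2 : ℝ)
  have h2 : (fun y : Euc n => Real.log ‖y‖) = fun y : Euc n => (1 / 2 : ℝ) * Real.log (‖y‖ ^ 2) := by
    funext y; rw [Real.log_pow]; push_cast; ring
  rw [h2]
  refine h1.congr_fderiv ?_
  ext y
  simp
  ring

theorem rad_deriv {n : ℕ} {x : Euc n} (hx : x ≠ 0) {g : ℝ → ℝ} {d : ℝ}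
    (hg : HasDerivAt g d (Real.log ‖x‖)) :
    HasFDerivAt (rad g : Euc n → ℝ) ((d / ‖x‖ ^ 2) • innerSL ℝ x) x := by
  have := hg.comp_hasFDerivAt x (log_norm_deriv hx)
  refine HasFDerivAt.congr_fderiv this ?_
  rw [smul_smul]; rfl

theorem rad_contDiffAt {n : ℕ} {x : Euc n} (hx : x ≠ 0) {g : ℝ → ℝ}
    (hg : ContDiffAt ℝ 2 g (Real.log ‖x‖)) : ContDiffAt ℝ 2 (rad g : Euc n → ℝ) x := by
  have h1 : ContDiffAt ℝ 2 (fun y : Euc n => Real.log ‖y‖) x :=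
    (contDiffAt_norm ℝ hx).log (norm_ne_zero_iff.2 hx)
  exact hg.comp x h1

theorem rad_quad {n : ℕ} {x : Euc n} (hx : x ≠ 0) {g g1 : ℝ → ℝ} {d2 : ℝ}
    (hg : ∀ᶠ t in 𝓝 (Real.log ‖x‖), HasDerivAt g (g1 t) t)
    (hg1 : HasDerivAt g1 d2 (Real.log ‖x‖)) (y : Euc n) :
    ∑ i, ∑ j, mobius (rad g) x i j * y i * y j =
      (Real.exp (-2 * rad g x) / ‖x‖ ^ 2 * (-g1 (Real.log ‖x‖) - (g1 (Real.log ‖x‖)) ^ 2 / 2))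
        * ‖y‖ ^ 2
      + (Real.exp (-2 * rad g x) / ‖x‖ ^ 4 * (2 * g1 (Real.log ‖x‖) - d2 +
        (g1 (Real.log ‖x‖)) ^ 2)) * (inner ℝ x y) ^ 2 := by
  have hxp : 0 < ‖x‖ := norm_pos_iff.2 hx
  set t := Real.log ‖x‖ with ht
  have hin : ∀ z w : Euc n, inner ℝ z w = ∑ i, z i * w i := by
    intro a b
    simp [PiLp.inner_apply, mul_comm]
  have hsing : ∀ (z : Euc n) (j : Fin n), inner ℝ z (EuclideanSpace.single j (1 : ℝ)) = z j := by
    intro z j; rw [hin]; simp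
  have hpg : ∀ i, pgrad (rad g) x i = g1 t / ‖x‖ ^ 2 * x i := by
    intro i
    unfold pgrad
    rw [(rad_deriv hx hg.self_of_nhds).fderiv]
    simp only [smul_apply, innerSL_apply_apply, hsing, smul_eq_mul, ht]
  have hph : ∀ i j, phess (rad g) x i j = (d2 - 2 * g1 t) / ‖x‖ ^ 4 * (x i * x j)
      + g1 t / ‖x‖ ^ 2 * (if i = j then 1 else 0) := by
    intro i j
    unfold phess
    set k : ℝ → ℝ := fun s => g1 s * Real.exp (-2 * s) with hk
    have hexp : ∀ z : Euc n, z ≠ 0 → Real.exp (-2 * Real.log ‖z‖) = (‖z‖ ^ 2)⁻¹ := by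
      intro z hz
      have hzp : 0 < ‖z‖ := norm_pos_iff.2 hz
      rw [show -2 * Real.log ‖z‖ = -(Real.log ‖z‖ + Real.log ‖z‖) by ring, Real.exp_neg,
        Real.exp_add, Real.exp_log hzp, sq]
    have hkd : HasDerivAt k ((d2 - 2 * g1 t) * (‖x‖ ^ 2)⁻¹) t := by
      have h1 : HasDerivAt (fun s : ℝ => Real.exp (-2 * s)) (Real.exp (-2 * t) * (-2)) t := by
        have := ((hasDerivAt_id t).const_mul (-2 : ℝ)).exp
        simpa using this
      have h2 := hg1.mul h1
      refine HasDerivAt.congr_deriv h2 ?_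
      rw [← hexp x hx]; ring
    have hev : (fun z => fderiv ℝ (rad g) z (EuclideanSpace.single j 1)) =ᶠ[𝓝 x]
        fun z : Euc n => rad k z * z j := by
      have hne : ∀ᶠ z in 𝓝 x, z ≠ 0 := isOpen_ne.mem_nhds hx
      have hcont : ContinuousAt (fun z : Euc n => Real.log ‖z‖) x := (log_norm_deriv hx).continuousAt
      filter_upwards [hne, hcont.eventually hg] with z hz hgz
      rw [(rad_deriv hz hgz).fderiv]
      simp only [smul_apply, innerSL_apply_apply, hsing, smul_eq_mul, rad, hk]
      rw [hexp z hz]; rfl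
    rw [hev.fderiv_eq]
    have hproj : HasFDerivAt (fun z : Euc n => z j) (EuclideanSpace.proj j : Euc n →L[ℝ] ℝ) x :=
      (EuclideanSpace.proj j : Euc n →L[ℝ] ℝ).hasFDerivAt
    have hmul : HasFDerivAt (fun z : Euc n => rad k z * z j) _ x := (rad_deriv hx hkd).mul hproj
    rw [hmul.fderiv]
    simp only [add_apply, smul_apply, innerSL_apply_apply,
      hsing, smul_eq_mul, rad, hk]
    rw [hexp x hx]
    have : (EuclideanSpace.proj j : Euc n →L[ℝ] ℝ) (EuclideanSpace.single i 1) =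
        if i = j then 1 else 0 := by
      simp [eq_comm]
    rw [this, ← ht]
    field_simp
    ring
  rw [mobius_quad]
  have e1 : ∑ i, pgrad (rad g) x i * y i = g1 t / ‖x‖ ^ 2 * inner ℝ x y := by
    rw [hin, Finset.mul_sum]
    exact Finset.sum_congr rfl fun i _ => by rw [hpg]; ring
  have e2 : ∑ k, pgrad (rad g) x k ^ 2 = g1 t ^ 2 / ‖x‖ ^ 2 := by
    have : ∑ k, pgrad (rad g) x k ^ 2 = (g1 t / ‖x‖ ^ 2) ^ 2 * ‖x‖ ^ 2 := by
      rw [EuclideanSpace.real_norm_sq_eq x, Finset.mul_sum, ← EuclideanSpace.real_norm_sq_eq x]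
      exact Finset.sum_congr rfl fun i _ => by rw [hpg]; ring
    rw [this]; field_simp
  have e3 : ∑ i, ∑ j, phess (rad g) x i j * y i * y j =
      (d2 - 2 * g1 t) / ‖x‖ ^ 4 * (inner ℝ x y) ^ 2 + g1 t / ‖x‖ ^ 2 * ‖y‖ ^ 2 := by
    have h1 : ‖y‖ ^ 2 = ∑ i, ∑ j, (if i = j then (1 : ℝ) else 0) * y i * y j := by
      rw [EuclideanSpace.real_norm_sq_eq]
      refine Finset.sum_congr rfl fun i _ => ?_
      simp [sq]
    rw [h1, hin, sq, Finset.sum_mul_sum]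
    simp only [Finset.mul_sum, ← Finset.sum_add_distrib]
    exact Finset.sum_congr rfl fun i _ => Finset.sum_congr rfl fun j _ => by rw [hph]; ring
  rw [e1, e2, e3]
  field_simp
  ring

/-- radial profile, twice continuously differentiable in the interior -/
structure Prof (ta tb : ℝ) (g g1 g2 : ℝ → ℝ) : Prop where
  cont : ContinuousOn g (Icc ta tb)
  d1 : ∀ t ∈ Ioo ta tb, HasDerivAt g (g1 t) t
  d2 : ∀ t ∈ Ioo ta tb, HasDerivAt g1 (g2 t) t
  c2 : ContinuousOn g2 (Ioo ta tb)

/-- eigenvalue vector of a radial profile up to a positive factor -/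
def FF (n : ℕ) (d1 d2 : ℝ) : Fin n → ℝ := vec n (-d2 + d1 + d1 ^ 2 / 2) (-d1 - d1 ^ 2 / 2)

theorem Prof.contDiffAt {ta tb : ℝ} {g g1 g2 : ℝ → ℝ} (h : Prof ta tb g g1 g2) {t : ℝ}
    (ht : t ∈ Ioo ta tb) : ContDiffAt ℝ 2 g t := by
  have ho : IsOpen (Ioo ta tb) := isOpen_Ioo
  have h1 : ContDiffOn ℝ 1 g1 (Ioo ta tb) := by
    rw [show (1 : WithTop ℕ∞) = 0 + 1 by norm_num, contDiffOn_succ_iff_deriv_of_isOpen ho]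
    refine ⟨fun s hs => (h.d2 s hs).differentiableAt.differentiableWithinAt, by simp, ?_⟩
    rw [contDiffOn_zero]
    exact h.c2.congr fun s hs => (h.d2 s hs).deriv
  have h2 : ContDiffOn ℝ 2 g (Ioo ta tb) := by
    rw [show (2 : WithTop ℕ∞) = 1 + 1 by norm_num, contDiffOn_succ_iff_deriv_of_isOpen ho]
    refine ⟨fun s hs => (h.d1 s hs).differentiableAt.differentiableWithinAt, by simp, ?_⟩
    exact h1.congr fun s hs => (h.d1 s hs).deriv
  exact h2.contDiffAt (ho.mem_nhds ht)

theorem Prof.shift {ta tb : ℝ} {g g1 g2 : ℝ → ℝ} (h : Prof ta tb g g1 g2) (k : ℝ) :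
    Prof ta tb (fun t => g t + k) g1 g2 :=
  ⟨h.cont.add continuousOn_const, fun t ht => (h.d1 t ht).add_const k, h.d2, h.c2⟩

theorem rad_vec (n : ℕ) (e s d1 d2 : ℝ) (hs : s ≠ 0) :
    vec n (e / s ^ 2 * (-d1 - d1 ^ 2 / 2) + (e / s ^ 4 * (2 * d1 - d2 + d1 ^ 2)) * s ^ 2)
      (e / s ^ 2 * (-d1 - d1 ^ 2 / 2)) = (e / s ^ 2) • FF n d1 d2 := by
  rw [FF, smul_vec]
  congr 1
  field_simp
  ring

section
variable {n : ℕ} {ta tb : ℝ} {g g1 g2 : ℝ → ℝ} {x : Euc n} {S : Set (Fin n → ℝ)}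

theorem prof_ev (h : Prof ta tb g g1 g2) {t : ℝ} (ht : t ∈ Ioo ta tb) :
    ∀ᶠ s in 𝓝 t, HasDerivAt g (g1 s) s := by
  filter_upwards [isOpen_Ioo.mem_nhds ht] with s hs using h.d1 s hs

theorem rad_up (hn : 2 ≤ n) (hS : SymUp S) (hc : ∀ lam : Fin n → ℝ, ∀ t : ℝ, 0 < t →
      (t • lam ∈ S ↔ lam ∈ S)) (h : Prof ta tb g g1 g2) (hx : x ≠ 0)
    (ht : Real.log ‖x‖ ∈ Ioo ta tb) {M : Matrix (Fin n) (Fin n) ℝ} (hM : M.IsHermitian)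
    (hle : ∀ y : Euc n, ∑ i, ∑ j, mobius (rad g) x i j * y i * y j ≤
      ∑ i, ∑ j, M i j * y i * y j)
    (hF : FF n (g1 (Real.log ‖x‖)) (g2 (Real.log ‖x‖)) ∈ S) : hM.eigenvalues ∈ S := by
  refine eig_up hn hS hM x hx _ _
    (fun y => (le_of_eq (rad_quad hx (prof_ev h ht) (h.d2 _ ht) y).symm).trans (hle y)) ?_
  · rw [rad_vec n _ _ _ _ (norm_ne_zero_iff.2 hx), hc]
    · exact hF
    · have := norm_pos_iff.2 hx
      positivity

theorem rad_down (hn : 2 ≤ n) (hS : SymUp S) (hc : ∀ lam : Fin n → ℝ, ∀ t : ℝ, 0 < t →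
      (t • lam ∈ S ↔ lam ∈ S)) (h : Prof ta tb g g1 g2) (hx : x ≠ 0)
    (ht : Real.log ‖x‖ ∈ Ioo ta tb) {M : Matrix (Fin n) (Fin n) ℝ} (hM : M.IsHermitian)
    (hle : ∀ y : Euc n, ∑ i, ∑ j, M i j * y i * y j ≤
      ∑ i, ∑ j, mobius (rad g) x i j * y i * y j)
    (hF : hM.eigenvalues ∈ S) : FF n (g1 (Real.log ‖x‖)) (g2 (Real.log ‖x‖)) ∈ S := by
  have := eig_down hn hS hM x hx _ _ (fun y => by
    have := hle y
    rw [rad_quad hx (prof_ev h ht) (h.d2 _ ht)] at this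
    exact this) hF
  rw [rad_vec n _ _ _ _ (norm_ne_zero_iff.2 hx), hc] at this
  · exact this
  · have := norm_pos_iff.2 hx
    positivity

end

/-- open annulus -/
def Ann (n : ℕ) (a b : ℝ) : Set (Euc n) := {x : Euc n | a < ‖x‖ ∧ ‖x‖ < b}
/-- closed annulus -/
def CAnn (n : ℕ) (a b : ℝ) : Set (Euc n) := {x : Euc n | a ≤ ‖x‖ ∧ ‖x‖ ≤ b}

theorem isOpen_ann (n : ℕ) (a b : ℝ) : IsOpen (Ann n a b) :=
  (isOpen_lt continuous_const continuous_norm).inter (isOpen_lt continuous_norm continuous_const)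

theorem isCompact_cann (n : ℕ) (a b : ℝ) : IsCompact (CAnn n a b) := by
  refine (isCompact_closedBall (0 : Euc n) b).of_isClosed_subset ?_ ?_
  · exact (isClosed_le continuous_const continuous_norm).inter
      (isClosed_le continuous_norm continuous_const)
  · intro x hx
    simpa using hx.2

theorem log_mem {n : ℕ} {a b : ℝ} (ha : 0 < a) {x : Euc n} (hx : x ∈ Ann n a b) :
    Real.log ‖x‖ ∈ Ioo (Real.log a) (Real.log b) :=
  ⟨Real.log_lt_log ha hx.1, Real.log_lt_log (ha.trans hx.1) hx.2⟩

theorem log_mem' {n : ℕ} {a b : ℝ} (ha : 0 < a) {x : Euc n} (hx : x ∈ CAnn n a b) :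
    Real.log ‖x‖ ∈ Icc (Real.log a) (Real.log b) :=
  ⟨Real.log_le_log ha hx.1, Real.log_le_log (ha.trans_le hx.1) hx.2⟩

theorem rad_cont {n : ℕ} {a b : ℝ} (ha : 0 < a) {g : ℝ → ℝ}
    (hg : ContinuousOn g (Icc (Real.log a) (Real.log b))) :
    ContinuousOn (rad g : Euc n → ℝ) (CAnn n a b) := by
  refine hg.comp (ContinuousOn.log continuous_norm.continuousOn fun x hx => ?_)
    (fun x hx => log_mem' ha hx)
  exact (ha.trans_le hx.1).ne'

section
variable {n : ℕ} {a b α β : ℝ} {g g1 g2 : ℝ → ℝ} {Γ : Set (Fin n → ℝ)} {w : Euc n → ℝ}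

theorem ne_zero_of_ann (ha : 0 < a) {x : Euc n} (hx : x ∈ Ann n a b) : x ≠ 0 :=
  norm_pos_iff.1 (ha.trans hx.1)

theorem cmp_super (hn : 2 ≤ n) (hΓ : CondC Γ) (ha : 0 < a)
    (hw : ContinuousOn w (CAnn n a b)) (hsup : Supersol Γ (Ann n a b) w)
    (hwa : ∀ x : Euc n, ‖x‖ = a → w x = α) (hwb : ∀ x : Euc n, ‖x‖ = b → w x = β)
    (h : Prof (Real.log a) (Real.log b) g g1 g2)
    (hF : ∀ t ∈ Ioo (Real.log a) (Real.log b), FF n (g1 t) (g2 t) ∉ closure Γ)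
    {m : ℝ} (hma : m ≤ α - g (Real.log a)) (hmb : m ≤ β - g (Real.log b))
    {x : Euc n} (hx : x ∈ CAnn n a b) : m ≤ w x - rad g x := by
  have hcont : ContinuousOn (fun x => w x - rad g x) (CAnn n a b) := hw.sub (rad_cont ha h.cont)
  obtain ⟨x0, hx0, hmin⟩ := (isCompact_cann n a b).exists_isMinOn ⟨x, hx⟩ hcont
  have hmin' : ∀ y ∈ CAnn n a b, w x0 - rad g x0 ≤ w y - rad g y := fun y hy => hmin hy
  refine le_trans ?_ (hmin' x hx)
  by_cases h1 : ‖x0‖ = a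
  · rw [hwa x0 h1, rad, h1]; exact hma
  by_cases h2 : ‖x0‖ = b
  · rw [hwb x0 h2, rad, h2]; exact hmb
  exfalso
  have hxA : x0 ∈ Ann n a b := ⟨lt_of_le_of_ne hx0.1 (Ne.symm h1), lt_of_le_of_ne hx0.2 h2⟩
  have hne := ne_zero_of_ann ha hxA
  have ht := log_mem ha hxA
  set k := w x0 - rad g x0 with hk
  have hP := h.shift k
  obtain ⟨hM, hE⟩ := supersol_use (isOpen_ann n a b) hsup hxA
    (φ := rad (fun t => g t + k)) (rad_contDiffAt hne (hP.contDiffAt ht))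
    (by simp only [rad, hk]; ring) (by
      filter_upwards [(isOpen_ann n a b).mem_nhds hxA] with y hy
      have := hmin' y ⟨hy.1.le, hy.2.le⟩
      simp only [rad] at this ⊢
      linarith)
  exact hF _ ht (rad_down hn (symUp_closure hΓ) (fun _ _ => cone_closure_iff hΓ) hP hne ht hM
    (fun y => le_rfl) hE)

theorem cmp_sub (hn : 2 ≤ n) (hΓ : CondC Γ) (ha : 0 < a)
    (hw : ContinuousOn w (CAnn n a b)) (hsub : Subsol Γ (Ann n a b) w)
    (hwa : ∀ x : Euc n, ‖x‖ = a → w x = α) (hwb : ∀ x : Euc n, ‖x‖ = b → w x = β)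
    (h : Prof (Real.log a) (Real.log b) g g1 g2)
    (hF : ∀ t ∈ Ioo (Real.log a) (Real.log b), FF n (g1 t) (g2 t) ∈ Γ)
    {m : ℝ} (hma : α - g (Real.log a) ≤ m) (hmb : β - g (Real.log b) ≤ m)
    {x : Euc n} (hx : x ∈ CAnn n a b) : w x - rad g x ≤ m := by
  have hcont : ContinuousOn (fun x => w x - rad g x) (CAnn n a b) := hw.sub (rad_cont ha h.cont)
  obtain ⟨x0, hx0, hmax⟩ := (isCompact_cann n a b).exists_isMaxOn ⟨x, hx⟩ hcont
  have hmax' : ∀ y ∈ CAnn n a b, w y - rad g y ≤ w x0 - rad g x0 := fun y hy => hmax hy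
  refine le_trans (hmax' x hx) ?_
  by_cases h1 : ‖x0‖ = a
  · rw [hwa x0 h1, rad, h1]; exact hma
  by_cases h2 : ‖x0‖ = b
  · rw [hwb x0 h2, rad, h2]; exact hmb
  exfalso
  have hxA : x0 ∈ Ann n a b := ⟨lt_of_le_of_ne hx0.1 (Ne.symm h1), lt_of_le_of_ne hx0.2 h2⟩
  have hne := ne_zero_of_ann ha hxA
  have ht := log_mem ha hxA
  set k := w x0 - rad g x0 with hk
  have hP := h.shift k
  obtain ⟨hM, hE⟩ := subsol_use (isOpen_ann n a b) hsub hxA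
    (φ := rad (fun t => g t + k)) (rad_contDiffAt hne (hP.contDiffAt ht))
    (by simp only [rad, hk]; ring) (by
      filter_upwards [(isOpen_ann n a b).mem_nhds hxA] with y hy
      have := hmax' y ⟨hy.1.le, hy.2.le⟩
      simp only [rad] at this ⊢
      linarith)
  exact hE (rad_up hn (symUp_self hΓ) (fun _ _ => cone_iff hΓ) hP hne ht hM
    (fun y => le_rfl) (hF _ ht))

theorem rad_supersol (hn : 2 ≤ n) (hΓ : CondC Γ) (ha : 0 < a)
    (h : Prof (Real.log a) (Real.log b) g g1 g2)
    (hF : ∀ t ∈ Ioo (Real.log a) (Real.log b), FF n (g1 t) (g2 t) ∈ closure Γ) :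
    Supersol Γ (Ann n a b) (rad g) := by
  intro x hx φ hφ heq hle
  rw [(isOpen_ann n a b).nhdsWithin_eq hx] at hle
  have hne := ne_zero_of_ann ha hx
  have ht := log_mem ha hx
  have hM := mobius_herm (hφ.contDiffAt (x := x))
  exact ⟨hM, rad_up hn (symUp_closure hΓ) (fun _ _ => cone_closure_iff hΓ) h hne ht hM
    (mobius_mono hφ.contDiffAt (rad_contDiffAt hne (h.contDiffAt ht)) heq hle) (hF _ ht)⟩

theorem rad_subsol (hn : 2 ≤ n) (hΓ : CondC Γ) (ha : 0 < a)
    (h : Prof (Real.log a) (Real.log b) g g1 g2)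
    (hF : ∀ t ∈ Ioo (Real.log a) (Real.log b), FF n (g1 t) (g2 t) ∉ Γ) :
    Subsol Γ (Ann n a b) (rad g) := by
  intro x hx φ hφ heq hle
  rw [(isOpen_ann n a b).nhdsWithin_eq hx] at hle
  have hne := ne_zero_of_ann ha hx
  have ht := log_mem ha hx
  have hM := mobius_herm (hφ.contDiffAt (x := x))
  refine ⟨hM, fun hE => hF _ ht ?_⟩
  exact rad_down hn (symUp_self hΓ) (fun _ _ => cone_iff hΓ) h hne ht hM
    (mobius_mono (rad_contDiffAt hne (h.contDiffAt ht)) hφ.contDiffAt heq.symm hle) hE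

/-- the notion of solution of the Dirichlet problem -/
def IsSol (Γ : Set (Fin n → ℝ)) (a b α β : ℝ) (v : Euc n → ℝ) : Prop :=
  ContinuousOn v (CAnn n a b) ∧ Supersol Γ (Ann n a b) v ∧ Subsol Γ (Ann n a b) v ∧
      (∀ x : Euc n, ‖x‖ = a → v x = α) ∧ (∀ x : Euc n, ‖x‖ = b → v x = β)

theorem core (hn : 2 ≤ n) (hΓ : CondC Γ) (ha : 0 < a) (hab : a < b)
    (h : Prof (Real.log a) (Real.log b) g g1 g2)
    (hF : ∀ t ∈ Ioo (Real.log a) (Real.log b), FF n (g1 t) (g2 t) ∈ closure Γ ∧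
      FF n (g1 t) (g2 t) ∉ Γ)
    (hga : g (Real.log a) = α) (hgb : g (Real.log b) = β)
    (happ1 : ∀ ε > 0, ∃ f f1 f2, Prof (Real.log a) (Real.log b) f f1 f2 ∧
      (∀ t ∈ Ioo (Real.log a) (Real.log b), FF n (f1 t) (f2 t) ∈ Γ) ∧
      ∀ t ∈ Icc (Real.log a) (Real.log b), |f t - g t| ≤ ε)
    (happ2 : ∀ ε > 0, ∃ f f1 f2, Prof (Real.log a) (Real.log b) f f1 f2 ∧
      (∀ t ∈ Ioo (Real.log a) (Real.log b), FF n (f1 t) (f2 t) ∉ closure Γ) ∧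
      ∀ t ∈ Icc (Real.log a) (Real.log b), |f t - g t| ≤ ε) :
    ∃ v : Euc n → ℝ, IsSol Γ a b α β v ∧ ∀ w, IsSol Γ a b α β w → EqOn w v (CAnn n a b) := by
  have hlog : Real.log a < Real.log b := Real.log_lt_log ha hab
  refine ⟨rad g, ⟨rad_cont ha h.cont, rad_supersol hn hΓ ha h fun t ht => (hF t ht).1,
    rad_subsol hn hΓ ha h fun t ht => (hF t ht).2, fun x hx => by rw [rad, hx, hga],
    fun x hx => by rw [rad, hx, hgb]⟩, ?_⟩
  rintro w ⟨w1, w2, w3, w4, w5⟩ x hx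
  have ht := log_mem' ha hx
  apply le_antisymm
  · refine le_of_forall_pos_le_add fun ε hε => ?_
    obtain ⟨f, f1, f2, hf, hfF, hfe⟩ := happ1 (ε / 2) (by positivity)
    have ea := abs_le.1 (hfe (Real.log a) ⟨le_rfl, hlog.le⟩)
    have eb := abs_le.1 (hfe (Real.log b) ⟨hlog.le, le_rfl⟩)
    have ex := abs_le.1 (hfe _ ht)
    have := cmp_sub hn hΓ ha w1 w3 w4 w5 hf hfF (m := ε / 2)
      (by linarith [ea.1]) (by linarith [eb.1]) hx
    simp only [rad] at this ⊢
    linarith [ex.2]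
  · refine le_of_forall_pos_le_add fun ε hε => ?_
    obtain ⟨f, f1, f2, hf, hfF, hfe⟩ := happ2 (ε / 2) (by positivity)
    have ea := abs_le.1 (hfe (Real.log a) ⟨le_rfl, hlog.le⟩)
    have eb := abs_le.1 (hfe (Real.log b) ⟨hlog.le, le_rfl⟩)
    have ex := abs_le.1 (hfe _ ht)
    have := cmp_super hn hΓ ha w1 w2 w4 w5 hf hfF (m := -(ε / 2))
      (by linarith [ea.2]) (by linarith [eb.2]) hx
    simp only [rad] at this ⊢
    linarith [ex.1]

end

/-- `p` solves the Riccati equation -/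
structure PS (ta tb k : ℝ) (p : ℝ → ℝ) : Prop where
  cont : ContinuousOn p (Icc ta tb)
  der : ∀ t ∈ Ioo ta tb, HasDerivAt p (k * (1 - p t ^ 2)) t

theorem PS.prof {ta tb k : ℝ} {p : ℝ → ℝ} (hab : ta < tb) (h : PS ta tb k p) (γ : ℝ) :
    Prof ta tb (fun t => γ + ∫ s in ta..t, (p s - 1)) (fun t => p t - 1)
      (fun t => k * (1 - p t ^ 2)) := by
  have hc : ContinuousOn (fun s => p s - 1) (Icc ta tb) := h.cont.sub continuousOn_const
  have hii : ∀ t ∈ Icc ta tb, IntervalIntegrable (fun s => p s - 1) volume ta t := fun t ht =>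
    (hc.mono (Icc_subset_Icc le_rfl ht.2)).intervalIntegrable_of_Icc ht.1
  refine ⟨?_, fun t ht => ?_, fun t ht => ?_, ?_⟩
  · refine continuousOn_const.add ?_
    have := intervalIntegral.continuousOn_primitive_interval (f := fun s => p s - 1) (μ := volume)
      (a := ta) (b := tb) (by rw [uIcc_of_le hab.le]; exact hc.integrableOn_Icc)
    rwa [uIcc_of_le hab.le] at this
  · have hca : ContinuousAt (fun s => p s - 1) t := hc.continuousAt (Icc_mem_nhds ht.1 ht.2)
    have hm : StronglyMeasurableAtFilter (fun s => p s - 1) (𝓝 t) volume :=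
      ContinuousOn.stronglyMeasurableAtFilter isOpen_Ioo (hc.mono Ioo_subset_Icc_self) t ht
    exact (intervalIntegral.integral_hasDerivAt_right (hii t ⟨ht.1.le, ht.2.le⟩) hm hca).const_add γ
  · exact (h.der t ht).sub_const 1
  · have := h.cont.mono (Ioo_subset_Icc_self)
    exact continuousOn_const.mul (continuousOn_const.sub (this.pow 2))

theorem FF_eq (n : ℕ) (p k : ℝ) : FF n (p - 1) (k * (1 - p ^ 2)) =
    vec n ((1 - p ^ 2) / 2 * (-(2 * k + 1))) ((1 - p ^ 2) / 2) := by
  unfold FF; congr 1 <;> ring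

theorem FF_lt (n : ℕ) (p k : ℝ) : FF n (p - 1) (k * (1 - p ^ 2)) =
    ((1 - p ^ 2) / 2) • vec n (-(2 * k + 1)) 1 := by
  rw [FF_eq, smul_vec, mul_one]

theorem FF_gt (n : ℕ) (p k : ℝ) : FF n (p - 1) (k * (1 - p ^ 2)) =
    ((p ^ 2 - 1) / 2) • vec n (2 * k + 1) (-1) := by
  rw [FF_eq, smul_vec]; congr 1 <;> ring

section
variable {n : ℕ} {a b α β : ℝ} {Γ : Set (Fin n → ℝ)}

theorem pack (hn : 2 ≤ n) (hΓ : CondC Γ) (ha : 0 < a) (hab : a < b) {k : ℝ} {p : ℝ → ℝ}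
    (h : PS (Real.log a) (Real.log b) k p)
    (hF : ∀ t ∈ Ioo (Real.log a) (Real.log b), FF n (p t - 1) (k * (1 - p t ^ 2)) ∈ closure Γ ∧
      FF n (p t - 1) (k * (1 - p t ^ 2)) ∉ Γ)
    (hintegral : ∫ s in (Real.log a)..(Real.log b), p s = β - α + (Real.log b - Real.log a))
    (happ1 : ∀ ε > 0, ∃ k' q, PS (Real.log a) (Real.log b) k' q ∧
      (∀ t ∈ Ioo (Real.log a) (Real.log b), FF n (q t - 1) (k' * (1 - q t ^ 2)) ∈ Γ) ∧
      ∀ t ∈ Icc (Real.log a) (Real.log b), |q t - p t| ≤ ε)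
    (happ2 : ∀ ε > 0, ∃ k' q, PS (Real.log a) (Real.log b) k' q ∧
      (∀ t ∈ Ioo (Real.log a) (Real.log b), FF n (q t - 1) (k' * (1 - q t ^ 2)) ∉ closure Γ) ∧
      ∀ t ∈ Icc (Real.log a) (Real.log b), |q t - p t| ≤ ε) :
    ∃ v : Euc n → ℝ, IsSol Γ a b α β v ∧ ∀ w, IsSol Γ a b α β w → EqOn w v (CAnn n a b) := by
  have hlog : Real.log a < Real.log b := Real.log_lt_log ha hab
  set ta := Real.log a
  set tb := Real.log b
  have hii : ∀ q : ℝ → ℝ, ContinuousOn q (Icc ta tb) → ∀ t ∈ Icc ta tb,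
      IntervalIntegrable q volume ta t := fun q hq t ht =>
    (hq.mono (Icc_subset_Icc le_rfl ht.2)).intervalIntegrable_of_Icc ht.1
  have close : ∀ ε > 0, ∀ q : ℝ → ℝ, ContinuousOn q (Icc ta tb) →
      (∀ t ∈ Icc ta tb, |q t - p t| ≤ ε / (tb - ta)) →
      ∀ t ∈ Icc ta tb, |(α + ∫ s in ta..t, (q s - 1)) - (α + ∫ s in ta..t, (p s - 1))| ≤ ε := by
    intro ε hε q hq hqp t ht
    have e1 : (α + ∫ s in ta..t, (q s - 1)) - (α + ∫ s in ta..t, (p s - 1)) =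
        ∫ s in ta..t, (q s - p s) := by
      rw [intervalIntegral.integral_sub (hii q hq t ht) (by simp),
        intervalIntegral.integral_sub (hii p h.cont t ht) (by simp),
        intervalIntegral.integral_sub (hii q hq t ht) (hii p h.cont t ht)]
      ring
    rw [e1]
    have h2 := intervalIntegral.norm_integral_le_of_norm_le_const (a := ta) (b := t)
      (f := fun s => q s - p s) (C := ε / (tb - ta)) (by
        intro s hs
        rw [uIoc_of_le ht.1] at hs
        exact hqp s ⟨hs.1.le, hs.2.trans ht.2⟩)
    rw [Real.norm_eq_abs, abs_of_nonneg (sub_nonneg.2 ht.1)] at h2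
    refine h2.trans ?_
    have hT : 0 < tb - ta := sub_pos.2 hlog
    rw [div_mul_eq_mul_div, div_le_iff₀ hT]
    have := ht.2
    gcongr
  have hT : 0 < tb - ta := sub_pos.2 hlog
  refine core hn hΓ ha hab (h.prof hlog α) hF ?_ ?_ ?_ ?_
  · change α + ∫ s in ta..ta, (p s - 1) = α
    simp
  · change α + ∫ s in ta..tb, (p s - 1) = β
    rw [intervalIntegral.integral_sub (hii p h.cont tb ⟨hlog.le, le_rfl⟩) (by simp), hintegral]
    simp
  · intro ε hε
    obtain ⟨k', q, h1, h2, h3⟩ := happ1 (ε / (tb - ta)) (by positivity)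
    exact ⟨_, _, _, h1.prof hlog α, h2, close ε hε q h1.cont h3⟩
  · intro ε hε
    obtain ⟨k', q, h1, h2, h3⟩ := happ2 (ε / (tb - ta)) (by positivity)
    exact ⟨_, _, _, h1.prof hlog α, h2, close ε hε q h1.cont h3⟩

end

/-! hyperbolic tangent -/

theorem tanh_der (x : ℝ) : HasDerivAt Real.tanh (1 - Real.tanh x ^ 2) x := by
  have h1 := (Real.hasDerivAt_sinh x).div (Real.hasDerivAt_cosh x) (Real.cosh_pos x).ne'
  have h2 : Real.tanh = Real.sinh / Real.cosh := by
    funext y; simp [Real.tanh_eq_sinh_div_cosh]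
  rw [h2]
  refine h1.congr_deriv ?_
  have := (Real.cosh_pos x).ne'
  simp only [Pi.div_apply]
  field_simp

theorem tanh_mem (x : ℝ) : Real.tanh x ∈ Ioo (-1 : ℝ) 1 := Real.tanh_bijOn.mapsTo (mem_univ x)

theorem tanh_sq_lt (x : ℝ) : Real.tanh x ^ 2 < 1 := by
  have := tanh_mem x
  nlinarith [this.1, this.2]

theorem tanh_smono : StrictMono Real.tanh :=
  strictMono_of_hasDerivAt_pos tanh_der fun x => by linarith [tanh_sq_lt x]

theorem tanh_cont : Continuous Real.tanh :=
  continuous_iff_continuousAt.2 fun x => (tanh_der x).continuousAt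

theorem tanh_lip (x y : ℝ) : |Real.tanh x - Real.tanh y| ≤ |x - y| := by
  have := Convex.norm_image_sub_le_of_norm_hasDerivWithin_le (f := Real.tanh) (C := 1)
    (s := univ) (x := y) (y := x) (fun z _ => (tanh_der z).hasDerivWithinAt)
    (fun z _ => by
      rw [Real.norm_eq_abs, abs_le]
      constructor <;> nlinarith [tanh_sq_lt z, sq_nonneg (Real.tanh z)]) convex_univ
    (mem_univ _) (mem_univ _)
  simpa using this

theorem tanh_pos' {x : ℝ} (hx : 0 < x) : 0 < Real.tanh x := by
  have := tanh_smono hx; simpa using this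

theorem tanh_le_self {x : ℝ} (hx : 0 ≤ x) : Real.tanh x ≤ x := by
  have := tanh_lip x 0
  simp only [Real.tanh_zero, sub_zero, abs_of_nonneg hx] at this
  exact (le_abs_self _).trans this

theorem tanh_large (ta tb k : ℝ) {η : ℝ} (hη : 0 < η) :
    ∃ c0, ∀ c ≥ c0, ∀ s ∈ Icc ta tb, 1 - η ≤ Real.tanh (k * s + c) := by
  obtain ⟨X, hX⟩ : ∃ X, 1 - η ≤ Real.tanh X := by
    by_cases h : 1 - η ≤ 0
    · exact ⟨0, by simpa using h⟩
    · push Not at h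
      obtain ⟨X, -, hX⟩ := Real.tanh_surjOn (show 1 - η ∈ Ioo (-1 : ℝ) 1 from
        ⟨by linarith, by linarith⟩)
      exact ⟨X, hX.ge⟩
  refine ⟨X + |k| * (|ta| + |tb|), fun c hc s hs => hX.trans (tanh_smono.monotone ?_)⟩
  have h1 : |s| ≤ |ta| + |tb| := by
    rw [abs_le]
    constructor
    · linarith [hs.1, neg_abs_le ta, abs_nonneg tb]
    · linarith [hs.2, le_abs_self tb, abs_nonneg ta]
  have h2 : -(k * s) ≤ |k| * (|ta| + |tb|) := by
    calc -(k * s) ≤ |k * s| := neg_le_abs _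
      _ = |k| * |s| := abs_mul _ _
      _ ≤ _ := by gcongr
  linarith

theorem tanh_small (ta tb k : ℝ) {η : ℝ} (hη : 0 < η) :
    ∃ c, ∀ s ∈ Icc ta tb, Real.tanh (k * s + c) ≤ -1 + η := by
  obtain ⟨c0, h⟩ := tanh_large ta tb (-k) hη
  refine ⟨-c0, fun s hs => ?_⟩
  have := h c0 le_rfl s hs
  rw [show k * s + -c0 = -(-k * s + c0) by ring, Real.tanh_neg]
  linarith

theorem lin_der (k c t : ℝ) : HasDerivAt (fun s : ℝ => k * s + c) k t := by
  simpa using ((hasDerivAt_id t).const_mul k).add_const c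

theorem PS_tanh (ta tb k c : ℝ) : PS ta tb k (fun s => Real.tanh (k * s + c)) := by
  refine ⟨(tanh_cont.comp (by fun_prop)).continuousOn, fun t _ => ?_⟩
  have := (tanh_der (k * t + c)).comp t (lin_der k c t)
  refine HasDerivAt.congr_deriv this (by ring)

theorem PS_const (ta tb k σ : ℝ) (hσ : σ ^ 2 = 1) : PS ta tb k (fun _ => σ) := by
  refine ⟨continuousOn_const, fun t _ => ?_⟩
  rw [hσ]; simpa using hasDerivAt_const t σ

theorem PS_coth (ta tb k c σ : ℝ) (hσ : σ ^ 2 = 1)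
    (hpos : ∀ s ∈ Icc ta tb, 0 < σ * k * s + c) :
    PS ta tb k (fun s => σ / Real.tanh (σ * k * s + c)) := by
  refine ⟨?_, fun t ht => ?_⟩
  · refine continuousOn_const.div (tanh_cont.comp (by fun_prop)).continuousOn fun s hs => ?_
    exact (tanh_pos' (hpos s hs)).ne'
  · have h0 := (tanh_pos' (hpos t ⟨ht.1.le, ht.2.le⟩)).ne'
    have h1' := HasDerivAt.comp t (tanh_der (σ * k * t + c)) (lin_der (σ * k) c t)
    have h1 : HasDerivAt (fun s => Real.tanh (σ * k * s + c))
      ((1 - Real.tanh (σ * k * t + c) ^ 2) * (σ * k)) t := h1'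
    have h2 := (hasDerivAt_const t σ).div h1 h0
    refine HasDerivAt.congr_deriv h2 ?_
    field_simp
    linear_combination (-k * (1 - Real.tanh (σ * k * t + c) ^ 2) + k) * hσ

theorem tanh_shoot {ta tb : ℝ} (hab : ta < tb) (k : ℝ) {D : ℝ} (h1 : -(tb - ta) < D)
    (h2 : D < tb - ta) : ∃ c, ∫ s in ta..tb, Real.tanh (k * s + c) = D := by
  have hT : 0 < tb - ta := sub_pos.2 hab
  have hcont : Continuous (fun c : ℝ => ∫ s in ta..tb, Real.tanh (k * s + c)) := by
    apply intervalIntegral.continuous_parametric_intervalIntegral_of_continuous'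
    exact tanh_cont.comp (by fun_prop)
  have hii : ∀ c, IntervalIntegrable (fun s => Real.tanh (k * s + c)) volume ta tb := fun c =>
    (tanh_cont.comp (by fun_prop)).intervalIntegrable _ _
  refine mem_range_of_exists_le_of_exists_ge hcont ?_ ?_
  · obtain ⟨c, hc⟩ := tanh_small ta tb k (η := (D + (tb - ta)) / (tb - ta))
      (div_pos (by linarith) hT)
    refine ⟨c, ?_⟩
    have := intervalIntegral.integral_mono_on hab.le (hii c) (by simp) hc
    refine this.trans (le_of_eq ?_)
    rw [intervalIntegral.integral_const, smul_eq_mul]; field_simp; ring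
  · obtain ⟨c, hc⟩ := tanh_large ta tb k (η := ((tb - ta) - D) / (tb - ta))
      (div_pos (by linarith) hT)
    refine ⟨c, ?_⟩
    have := intervalIntegral.integral_mono_on hab.le (by simp) (hii c) (hc c le_rfl)
    refine le_trans (le_of_eq ?_) this
    rw [intervalIntegral.integral_const, smul_eq_mul]; field_simp; ring

theorem inv_shoot {ta tb : ℝ} (hab : ta < tb) (k E : ℝ) :
    ∃ c e, 0 < e ∧ (∀ s ∈ Icc ta tb, e ≤ k * s + c) ∧
      E ≤ ∫ s in ta..tb, (k * s + c)⁻¹ := by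
  have hT : 0 < tb - ta := sub_pos.2 hab
  set K := |k| + 1 with hK
  have hK1 : 1 ≤ K := by simp [hK]
  have hK0 : 0 < K := by linarith
  set e := (tb - ta) / Real.exp (K * E) with he
  have he0 : 0 < e := by positivity
  have hlog : E ≤ (Real.log (K * (tb - ta) + e) - Real.log e) / K := by
    rw [le_div_iff₀ hK0, ← Real.log_div (by positivity) he0.ne',
      Real.le_log_iff_exp_le (by positivity), le_div_iff₀ he0]
    have : Real.exp (E * K) * e = tb - ta := by
      rw [he, mul_comm E K]; field_simp
    rw [this]; nlinarith
  have hcontinv : ∀ k' c', (∀ s ∈ Icc ta tb, e ≤ k' * s + c') →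
      IntervalIntegrable (fun s => (k' * s + c')⁻¹) volume ta tb := fun k' c' h =>
    ContinuousOn.intervalIntegrable_of_Icc hab.le (ContinuousOn.inv₀ (by fun_prop)
      fun s hs => (lt_of_lt_of_le he0 (h s hs)).ne')
  have hval : ∀ k' c', k' ≠ 0 → (∀ s ∈ Icc ta tb, e ≤ k' * s + c') →
      ∫ s in ta..tb, (k' * s + c')⁻¹ =
        Real.log (k' * tb + c') / k' - Real.log (k' * ta + c') / k' := by
    intro k' c' hk' h
    refine intervalIntegral.integral_eq_sub_of_hasDerivAt
      (f := fun s => Real.log (k' * s + c') / k') (fun s hs => ?_) (hcontinv k' c' h)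
    rw [uIcc_of_le hab.le] at hs
    have hp := lt_of_lt_of_le he0 (h s hs)
    have := ((lin_der k' c' s).log hp.ne').div_const k'
    refine HasDerivAt.congr_deriv this ?_
    field_simp
  rcases le_or_gt 0 k with hk | hk
  · have hb1 : ∀ s ∈ Icc ta tb, e ≤ k * s + (-(k * ta) + e) := fun s hs => by
      nlinarith [hs.1]
    have hb2 : ∀ s ∈ Icc ta tb, e ≤ K * s + (-(K * ta) + e) := fun s hs => by
      nlinarith [hs.1]
    refine ⟨-(k * ta) + e, e, he0, hb1, ?_⟩
    have h3 := hval K (-(K * ta) + e) hK0.ne' hb2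
    have h4 := intervalIntegral.integral_mono_on hab.le (hcontinv _ _ hb2) (hcontinv _ _ hb1)
      (fun s hs => by
        have p1 := lt_of_lt_of_le he0 (hb1 s hs)
        refine inv_anti₀ p1 ?_
        have : k ≤ K := by rw [hK, abs_of_nonneg hk]; linarith
        nlinarith [hs.1])
    refine le_trans ?_ h4
    rw [h3]
    refine hlog.trans (le_of_eq ?_)
    rw [sub_div]; congr 3 <;> ring
  · have hb1 : ∀ s ∈ Icc ta tb, e ≤ k * s + (-(k * tb) + e) := fun s hs => by
      nlinarith [hs.2]
    have hb2 : ∀ s ∈ Icc ta tb, e ≤ (-K) * s + (K * tb + e) := fun s hs => by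
      nlinarith [hs.2]
    refine ⟨-(k * tb) + e, e, he0, hb1, ?_⟩
    have h3 := hval (-K) (K * tb + e) (by linarith) hb2
    have h4 := intervalIntegral.integral_mono_on hab.le (hcontinv _ _ hb2) (hcontinv _ _ hb1)
      (fun s hs => by
        have p1 := lt_of_lt_of_le he0 (hb1 s hs)
        refine inv_anti₀ p1 ?_
        have : -k ≤ K := by rw [hK, abs_of_neg hk]; linarith
        nlinarith [hs.2])
    refine le_trans ?_ h4
    rw [h3]
    refine hlog.trans (le_of_eq ?_)
    rw [show -K * tb + (K * tb + e) = e by ring,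
      show -K * ta + (K * tb + e) = K * (tb - ta) + e by ring]
    field_simp
    ring

theorem coth_shoot {ta tb : ℝ} (hab : ta < tb) (k : ℝ) {E : ℝ} (hE : tb - ta < E) :
    ∃ c e, 0 < e ∧ (∀ s ∈ Icc ta tb, e ≤ k * s + c) ∧
      ∫ s in ta..tb, 1 / Real.tanh (k * s + c) = E := by
  have hT : 0 < tb - ta := sub_pos.2 hab
  have hE0 : 0 < E := hT.trans hE
  obtain ⟨c1, e, he0, hb, hEi⟩ := inv_shoot hab k E
  have hη : 0 < 1 - (tb - ta) / E := by
    rw [sub_pos, div_lt_one hE0]; exact hE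
  obtain ⟨c0, hc0⟩ := tanh_large ta tb k hη
  set c2 := max c0 c1
  let G : ℝ → ℝ := fun c => ∫ s in ta..tb, 1 / Real.tanh (max e (k * s + c))
  have hpos : ∀ z : ℝ, 0 < Real.tanh (max e z) := fun z => tanh_pos' (lt_max_of_lt_left he0)
  have hcont2 : Continuous (fun z : ℝ × ℝ => 1 / Real.tanh (max e (k * z.2 + z.1))) :=
    continuous_const.div (tanh_cont.comp (by fun_prop)) fun z => (hpos _).ne'
  have hG : Continuous G :=
    intervalIntegral.continuous_parametric_intervalIntegral_of_continuous' hcont2 _ _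
  have hb' : ∀ c ≥ c1, ∀ s ∈ Icc ta tb, e ≤ k * s + c := fun c hc s hs => by
    linarith [hb s hs]
  have hGe : ∀ c ≥ c1, G c = ∫ s in ta..tb, 1 / Real.tanh (k * s + c) := by
    intro c hc
    refine intervalIntegral.integral_congr fun s hs => ?_
    rw [uIcc_of_le hab.le] at hs
    simp only [max_eq_right (hb' c hc s hs)]
  have hii : ∀ c ≥ c1, IntervalIntegrable (fun s => 1 / Real.tanh (k * s + c)) volume ta tb :=
    fun c hc => ContinuousOn.intervalIntegrable_of_Icc hab.le
      (continuousOn_const.div (tanh_cont.comp (by fun_prop)).continuousOn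
        fun s hs => (tanh_pos' (lt_of_lt_of_le he0 (hb' c hc s hs))).ne')
  have h1 : E ≤ G c1 := by
    rw [hGe c1 le_rfl]
    refine hEi.trans ?_
    refine intervalIntegral.integral_mono_on hab.le ?_ (hii c1 le_rfl) fun s hs => ?_
    · exact ContinuousOn.intervalIntegrable_of_Icc hab.le (ContinuousOn.inv₀ (by fun_prop)
        fun s hs => (lt_of_lt_of_le he0 (hb s hs)).ne')
    · have hp := lt_of_lt_of_le he0 (hb s hs)
      rw [← one_div]
      exact one_div_le_one_div_of_le (tanh_pos' hp) (tanh_le_self hp.le)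
  have h2 : G c2 ≤ E := by
    rw [hGe c2 (le_max_right _ _)]
    have := intervalIntegral.integral_mono_on (g := fun _ => E / (tb - ta)) hab.le
      (hii c2 (le_max_right _ _)) (by simp) (fun s hs => by
        have h3 := hc0 c2 (le_max_left _ _) s hs
        have h4 : (tb - ta) / E ≤ Real.tanh (k * s + c2) := by linarith
        have := one_div_le_one_div_of_le (by positivity) h4
        rwa [one_div_div] at this)
    refine this.trans (le_of_eq ?_)
    rw [intervalIntegral.integral_const, smul_eq_mul]; field_simp
  obtain ⟨c, hc, hcE⟩ := intermediate_value_Icc' (le_max_right c0 c1) hG.continuousOn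
    (show E ∈ Icc (G c2) (G c1) from ⟨h2, h1⟩)
  exact ⟨c, e, he0, hb' c hc.1, by rw [← hGe c hc.1]; exact hcE⟩

section
variable {n : ℕ} {a b α β : ℝ} {Γ : Set (Fin n → ℝ)}

theorem FF_lt_mem (hΓ : CondC Γ) {p : ℝ} (k : ℝ) (hp : p ^ 2 < 1) :
    FF n (p - 1) (k * (1 - p ^ 2)) ∈ Γ ↔ vec n (-(2 * k + 1)) 1 ∈ Γ := by
  rw [FF_lt]; exact cone_iff hΓ (by linarith)

theorem FF_lt_mem' (hΓ : CondC Γ) {p : ℝ} (k : ℝ) (hp : p ^ 2 < 1) :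
    FF n (p - 1) (k * (1 - p ^ 2)) ∈ closure Γ ↔ vec n (-(2 * k + 1)) 1 ∈ closure Γ := by
  rw [FF_lt]; exact cone_closure_iff hΓ (by linarith)

theorem FF_gt_mem (hΓ : CondC Γ) {p : ℝ} (k : ℝ) (hp : 1 < p ^ 2) :
    FF n (p - 1) (k * (1 - p ^ 2)) ∈ Γ ↔ vec n (2 * k + 1) (-1) ∈ Γ := by
  rw [FF_gt]; exact cone_iff hΓ (by linarith)

theorem FF_gt_mem' (hΓ : CondC Γ) {p : ℝ} (k : ℝ) (hp : 1 < p ^ 2) :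
    FF n (p - 1) (k * (1 - p ^ 2)) ∈ closure Γ ↔ vec n (2 * k + 1) (-1) ∈ closure Γ := by
  rw [FF_gt]; exact cone_closure_iff hΓ (by linarith)

theorem abs_bd {ta tb s : ℝ} (hs : s ∈ Icc ta tb) : |s| ≤ |ta| + |tb| + 1 := by
  rw [abs_le]
  constructor
  · linarith [hs.1, neg_abs_le ta, abs_nonneg tb]
  · linarith [hs.2, le_abs_self tb, abs_nonneg ta]

theorem case_tanh (hn : 2 ≤ n) (hΓ : CondC Γ) (hmu : muPlus Γ ≠ ⊤) (ha : 0 < a) (hab : a < b)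
    (h1 : -2 * (Real.log b - Real.log a) < β - α) (h2 : β - α < 0) :
    ∃ v : Euc n → ℝ, IsSol Γ a b α β v ∧ ∀ w, IsSol Γ a b α β w → EqOn w v (CAnn n a b) := by
  obtain ⟨m, m1, m2, m3, m4⟩ := muPlus_data hΓ hmu
  have hlog : Real.log a < Real.log b := Real.log_lt_log ha hab
  obtain ⟨c, hc⟩ := tanh_shoot hlog ((m - 1) / 2)
    (D := β - α + (Real.log b - Real.log a)) (by linarith) (by linarith)
  have hB : 0 < |Real.log a| + |Real.log b| + 1 := by positivity
  have close : ∀ ε > 0, ∀ δ, |δ| = ε / (|Real.log a| + |Real.log b| + 1) →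
      ∀ t ∈ Icc (Real.log a) (Real.log b),
      |Real.tanh (((m - 1) / 2 + δ) * t + c) - Real.tanh ((m - 1) / 2 * t + c)| ≤ ε := by
    intro ε hε δ hδ t ht
    refine (tanh_lip _ _).trans ?_
    rw [show ((m - 1) / 2 + δ) * t + c - ((m - 1) / 2 * t + c) = δ * t by ring, abs_mul, hδ,
      div_mul_eq_mul_div, div_le_iff₀ hB]
    have := abs_bd ht
    gcongr
  refine pack hn hΓ ha hab (PS_tanh _ _ ((m - 1) / 2) c) (fun t _ => ?_) hc
    (fun ε hε => ?_) (fun ε hε => ?_)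
  · rw [FF_lt_mem hΓ _ (tanh_sq_lt _), FF_lt_mem' hΓ _ (tanh_sq_lt _),
      show 2 * ((m - 1) / 2) + 1 = m by ring]
    exact ⟨m1, m2⟩
  · have hd : 0 < ε / (|Real.log a| + |Real.log b| + 1) := by positivity
    refine ⟨_, _, PS_tanh _ _ ((m - 1) / 2 + -(ε / (|Real.log a| + |Real.log b| + 1))) c,
      fun t _ => ?_, close ε hε _ (by rw [abs_neg, abs_of_pos hd])⟩
    rw [FF_lt_mem hΓ _ (tanh_sq_lt _)]
    exact m3 _ (by linarith)
  · have hd : 0 < ε / (|Real.log a| + |Real.log b| + 1) := by positivity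
    refine ⟨_, _, PS_tanh _ _ ((m - 1) / 2 + ε / (|Real.log a| + |Real.log b| + 1)) c,
      fun t _ => ?_, close ε hε _ (by rw [abs_of_pos hd])⟩
    rw [FF_lt_mem' hΓ _ (tanh_sq_lt _)]
    exact m4 _ (by linarith)

theorem tanh_near (ta tb k σ : ℝ) (hσ : σ = 1 ∨ σ = -1) {ε : ℝ} (hε : 0 < ε) :
    ∃ c, ∀ s ∈ Icc ta tb, |Real.tanh (k * s + c) - σ| ≤ ε := by
  rcases hσ with rfl | rfl
  · obtain ⟨c, hc⟩ := tanh_large ta tb k hε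
    refine ⟨c, fun s hs => ?_⟩
    have h1 := hc c le_rfl s hs
    have h2 := (tanh_mem (k * s + c)).2
    rw [abs_le]; constructor <;> linarith
  · obtain ⟨c, hc⟩ := tanh_small ta tb k hε
    refine ⟨c, fun s hs => ?_⟩
    have h1 := hc s hs
    have h2 := (tanh_mem (k * s + c)).1
    rw [abs_le]; constructor <;> linarith

theorem case_one (hn : 2 ≤ n) (hΓ : CondC Γ) (hmu : muPlus Γ ≠ ⊤) (ha : 0 < a) (hab : a < b)
    {σ : ℝ} (hσ : σ = 1 ∨ σ = -1)
    (h : β - α + (Real.log b - Real.log a) = σ * (Real.log b - Real.log a)) :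
    ∃ v : Euc n → ℝ, IsSol Γ a b α β v ∧ ∀ w, IsSol Γ a b α β w → EqOn w v (CAnn n a b) := by
  obtain ⟨m, m1, m2, m3, m4⟩ := muPlus_data hΓ hmu
  have hσ2 : σ ^ 2 = 1 := by rcases hσ with rfl | rfl <;> norm_num
  refine pack hn hΓ ha hab (PS_const _ _ 0 σ hσ2) (fun t _ => ?_) ?_
    (fun ε hε => ?_) (fun ε hε => ?_)
  · have : FF n (σ - 1) (0 * (1 - σ ^ 2)) = 0 := by
      rw [FF_lt, hσ2]; simp
    rw [this]
    exact ⟨zero_mem_closure hΓ, condC_zero hΓ⟩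
  · rw [h, intervalIntegral.integral_const, smul_eq_mul, mul_comm]
  · obtain ⟨c, hc⟩ := tanh_near (Real.log a) (Real.log b) ((m - 1 - 1) / 2) σ hσ hε
    refine ⟨_, _, PS_tanh _ _ _ c, fun t _ => ?_, hc⟩
    rw [FF_lt_mem hΓ _ (tanh_sq_lt _)]
    exact m3 _ (by linarith)
  · obtain ⟨c, hc⟩ := tanh_near (Real.log a) (Real.log b) ((m + 1 - 1) / 2) σ hσ hε
    refine ⟨_, _, PS_tanh _ _ _ c, fun t _ => ?_, hc⟩
    rw [FF_lt_mem' hΓ _ (tanh_sq_lt _)]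
    exact m4 _ (by linarith)

theorem coth_sq {σ x : ℝ} (hσ : σ ^ 2 = 1) (hx : 0 < x) : 1 < (σ / Real.tanh x) ^ 2 := by
  rw [div_pow, hσ, lt_div_iff₀ (pow_pos (tanh_pos' hx) 2), one_mul]
  exact tanh_sq_lt x

theorem coth_lip {σ x y e : ℝ} (hσ : |σ| = 1) (he : 0 < e) (hx : e ≤ x) (hy : e ≤ y) :
    |σ / Real.tanh x - σ / Real.tanh y| ≤ |x - y| / Real.tanh e ^ 2 := by
  have te := tanh_pos' he
  have tx : Real.tanh e ≤ Real.tanh x := tanh_smono.monotone hx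
  have ty : Real.tanh e ≤ Real.tanh y := tanh_smono.monotone hy
  have px := te.trans_le tx
  have py := te.trans_le ty
  have e1 : σ / Real.tanh x - σ / Real.tanh y =
      σ * (Real.tanh y - Real.tanh x) / (Real.tanh x * Real.tanh y) := by
    field_simp
  rw [e1, abs_div, abs_mul, hσ, one_mul, abs_of_pos (mul_pos px py)]
  have h1 := tanh_lip y x
  rw [abs_sub_comm y x] at h1
  have h2 : Real.tanh e ^ 2 ≤ Real.tanh x * Real.tanh y := by
    rw [sq]; exact mul_le_mul tx ty te.le px.le
  exact div_le_div₀ (abs_nonneg _) h1 (pow_pos te 2) h2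

theorem case_coth (hn : 2 ≤ n) (hΓ : CondC Γ) (hmu : muMinus Γ < ⊤) (ha : 0 < a) (hab : a < b)
    {σ : ℝ} (hσ : σ = 1 ∨ σ = -1)
    (h : Real.log b - Real.log a < σ * (β - α + (Real.log b - Real.log a))) :
    ∃ v : Euc n → ℝ, IsSol Γ a b α β v ∧ ∀ w, IsSol Γ a b α β w → EqOn w v (CAnn n a b) := by
  obtain ⟨m, m1, m2, m3, m4⟩ := muMinus_data hΓ hmu
  have hlog : Real.log a < Real.log b := Real.log_lt_log ha hab
  have hσ2 : σ ^ 2 = 1 := by rcases hσ with rfl | rfl <;> norm_num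
  have hσa : |σ| = 1 := by rcases hσ with rfl | rfl <;> norm_num
  obtain ⟨c, e, he, hce, hc⟩ := coth_shoot hlog (σ * ((m - 1) / 2)) h
  set B := |Real.log a| + |Real.log b| + 1 with hBdef
  have hB : 0 < B := by positivity
  have te := tanh_pos' (half_pos he)
  have main : ∀ ε > 0, ∀ δ, |δ| = min (e / 2 / B) (ε * Real.tanh (e / 2) ^ 2 / B) →
      ∀ t ∈ Icc (Real.log a) (Real.log b),
      (e / 2 ≤ σ * ((m - 1) / 2 + δ) * t + c) ∧
      |σ / Real.tanh (σ * ((m - 1) / 2 + δ) * t + c) -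
        σ / Real.tanh (σ * ((m - 1) / 2) * t + c)| ≤ ε := by
    intro ε hε δ hδ t ht
    have d1 : |δ| ≤ e / 2 / B := hδ.le.trans (min_le_left _ _)
    have d2 : |δ| ≤ ε * Real.tanh (e / 2) ^ 2 / B := hδ.le.trans (min_le_right _ _)
    rw [le_div_iff₀ hB] at d1 d2
    have hs : |σ * δ * t| ≤ |δ| * B := by
      rw [abs_mul, abs_mul, hσa, one_mul]
      have := abs_bd ht
      gcongr
    have hx0 := hce t ht
    have hx1 : e / 2 ≤ σ * ((m - 1) / 2 + δ) * t + c := by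
      have := neg_abs_le (σ * δ * t)
      nlinarith
    refine ⟨hx1, (coth_lip hσa (half_pos he) hx1 (by linarith)).trans ?_⟩
    rw [div_le_iff₀ (pow_pos te 2)]
    refine le_trans (le_of_eq ?_) (hs.trans d2)
    congr 1; ring
  have hd : ∀ ε > 0, 0 < min (e / 2 / B) (ε * Real.tanh (e / 2) ^ 2 / B) := fun ε hε =>
    lt_min (by positivity) (by positivity)
  refine pack hn hΓ ha hab (PS_coth _ _ ((m - 1) / 2) c σ hσ2
    (fun s hs => lt_of_lt_of_le he (hce s hs))) (fun t ht => ?_) ?_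
    (fun ε hε => ?_) (fun ε hε => ?_)
  · have hq := coth_sq hσ2 (lt_of_lt_of_le he (hce t ⟨ht.1.le, ht.2.le⟩))
    rw [FF_gt_mem hΓ _ hq, FF_gt_mem' hΓ _ hq, show 2 * ((m - 1) / 2) + 1 = m by ring]
    exact ⟨m1, m2⟩
  · have : ∀ s, σ / Real.tanh (σ * ((m - 1) / 2) * s + c) =
      σ * (1 / Real.tanh (σ * ((m - 1) / 2) * s + c)) := fun s => by ring
    simp only [this]
    rw [intervalIntegral.integral_const_mul, hc]
    linear_combination (β - α + (Real.log b - Real.log a)) * hσ2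
  · have hM := main ε hε _ (abs_of_pos (hd ε hε))
    refine ⟨_, _, PS_coth _ _ ((m - 1) / 2 + min (e / 2 / B) (ε * Real.tanh (e / 2) ^ 2 / B))
      c σ hσ2 (fun s hs => lt_of_lt_of_le (half_pos he) (hM s hs).1), fun t ht => ?_,
      fun t ht => (hM t ht).2⟩
    rw [FF_gt_mem hΓ _ (coth_sq hσ2 (lt_of_lt_of_le (half_pos he) (hM t ⟨ht.1.le, ht.2.le⟩).1))]
    exact m3 _ (by linarith [hd ε hε])
  · have hM := main ε hε (-(min (e / 2 / B) (ε * Real.tanh (e / 2) ^ 2 / B)))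
      (by rw [abs_neg]; exact abs_of_pos (hd ε hε))
    refine ⟨_, _, PS_coth _ _ ((m - 1) / 2 + -(min (e / 2 / B) (ε * Real.tanh (e / 2) ^ 2 / B)))
      c σ hσ2 (fun s hs => lt_of_lt_of_le (half_pos he) (hM s hs).1), fun t ht => ?_,
      fun t ht => (hM t ht).2⟩
    rw [FF_gt_mem' hΓ _ (coth_sq hσ2 (lt_of_lt_of_le (half_pos he) (hM t ⟨ht.1.le, ht.2.le⟩).1))]
    exact m4 _ (by linarith [hd ε hε])

/-! nonexistence -/

theorem exp_der (K t0 t : ℝ) :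
    HasDerivAt (fun s : ℝ => Real.exp (K * (s - t0))) (K * Real.exp (K * (t - t0))) t := by
  have h1 : HasDerivAt (fun s : ℝ => K * (s - t0)) K t := by
    simpa using ((hasDerivAt_id t).sub_const t0).const_mul K
  exact h1.exp.congr_deriv (by ring)

/-- test profile -/
theorem prof_exp (ta tb L C K t0 : ℝ) :
    Prof ta tb (fun t => L * (t - t0) + C * (1 - Real.exp (K * (t - t0))))
      (fun t => L - C * (K * Real.exp (K * (t - t0))))
      (fun t => - (C * (K * (K * Real.exp (K * (t - t0)))))) := by
  refine ⟨by fun_prop, fun t _ => ?_, fun t _ => ?_, by fun_prop⟩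
  · have h1 : HasDerivAt (fun s : ℝ => L * (s - t0)) L t := by
      simpa using ((hasDerivAt_id t).sub_const t0).const_mul L
    have h2 := h1.add (((exp_der K t0 t).const_sub 1).const_mul C)
    exact h2.congr_deriv (by ring)
  · have h2 := (((exp_der K t0 t).const_mul K).const_mul C).const_sub L
    exact h2

theorem exists_unit (hn : 2 ≤ n) : ∃ u : Euc n, ‖u‖ = 1 :=
  ⟨EuclideanSpace.single (⟨0, by omega⟩ : Fin n) (1 : ℝ), by simp⟩

theorem ray_cont {w : Euc n → ℝ} (ha : 0 < a) (hw : ContinuousOn w (CAnn n a b)) {u : Euc n}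
    (hu : ‖u‖ = 1) : ContinuousOn (fun r : ℝ => w (r • u)) (Icc a b) := by
  refine hw.comp (by fun_prop) fun r hr => ?_
  have : ‖r • u‖ = r := by
    rw [norm_smul, hu, mul_one, Real.norm_eq_abs, abs_of_pos (ha.trans_le hr.1)]
  change a ≤ ‖r • u‖ ∧ ‖r • u‖ ≤ b
  rw [this]; exact hr

theorem exp_half : Real.exp (-1) < 1 / 2 := by
  have h2 := Real.exp_one_gt_d9
  rw [Real.exp_neg, ← one_div]
  exact one_div_lt_one_div_of_lt two_pos (by linarith)

theorem nonex (hn : 2 ≤ n) (hΓ : CondC Γ) (hmu : ¬ muMinus Γ < ⊤) (ha : 0 < a) (hab : a < b)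
    {w : Euc n → ℝ} (h : IsSol Γ a b α β w) :
    β - α ∈ Icc (-2 * (Real.log b - Real.log a)) 0 := by
  obtain ⟨hc, hsup, -, hwa, hwb⟩ := h
  have hlog : Real.log a < Real.log b := Real.log_lt_log ha hab
  obtain ⟨u, hu⟩ := exists_unit hn
  have hray := ray_cont ha hc hu
  have hnorm : ∀ r, 0 < r → ‖r • u‖ = r := fun r hr => by
    rw [norm_smul, hu, mul_one, Real.norm_eq_abs, abs_of_pos hr]
  have hneb : (𝓝[Ioo a b] a).NeBot := by
    rw [← mem_closure_iff_nhdsWithin_neBot, closure_Ioo hab.ne]; exact ⟨le_rfl, hab.le⟩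
  have hneb' : (𝓝[Ioo a b] b).NeBot := by
    rw [← mem_closure_iff_nhdsWithin_neBot, closure_Ioo hab.ne]; exact ⟨hab.le, le_rfl⟩
  constructor
  · by_contra hcon
    push Not at hcon
    set η := (α - β - 2 * (Real.log b - Real.log a)) / 2 with hη
    have hη0 : 0 < η := by rw [hη]; linarith
    have h1 : Tendsto (fun r : ℝ => w (r • u)) (𝓝[Ioo a b] b) (𝓝 (w (b • u))) :=
      (hray b ⟨hab.le, le_rfl⟩).mono Ioo_subset_Icc_self
    rw [hwb _ (hnorm b (ha.trans hab))] at h1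
    obtain ⟨r, hr1, hr2⟩ := ((h1.eventually (gt_mem_nhds (show β < β + η / 2 by linarith))).and
      self_mem_nhdsWithin).exists
    have hr0 : 0 < r := ha.trans hr2.1
    have hrt : Real.log r < Real.log b := Real.log_lt_log hr0 hr2.2
    set K := 1 / (Real.log b - Real.log r) with hK
    have hK0 : 0 < K := by rw [hK]; exact div_pos one_pos (by linarith)
    have hKe : K * (Real.log r - Real.log b) = -1 := by
      have : Real.log b - Real.log r ≠ 0 := by linarith
      rw [hK]; field_simp; ring
    have := cmp_super hn hΓ ha hc hsup hwa hwb
      (prof_exp (Real.log a) (Real.log b) (-2) η K (Real.log b)) (fun t _ => by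
        refine muMinus_top hΓ hmu _ _ ?_
        have : 0 < η * (K * Real.exp (K * (t - Real.log b))) := by positivity
        nlinarith) (m := β)
      (by have : 0 < η * Real.exp (K * (Real.log a - Real.log b)) := by positivity
          linarith) (by simp) (x := r • u)
      (by change a ≤ ‖r • u‖ ∧ ‖r • u‖ ≤ b
          rw [hnorm r hr0]; exact ⟨hr2.1.le, hr2.2.le⟩)
    rw [rad, hnorm r hr0, hKe] at this
    nlinarith [exp_half]
  · by_contra hcon
    push Not at hcon
    set η := (β - α) / 2 with hη
    have hη0 : 0 < η := by rw [hη]; linarith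
    have h1 : Tendsto (fun r : ℝ => w (r • u)) (𝓝[Ioo a b] a) (𝓝 (w (a • u))) :=
      (hray a ⟨le_rfl, hab.le⟩).mono Ioo_subset_Icc_self
    rw [hwa _ (hnorm a ha)] at h1
    obtain ⟨r, hr1, hr2⟩ := ((h1.eventually (gt_mem_nhds (show α < α + η / 2 by linarith))).and
      self_mem_nhdsWithin).exists
    have hr0 : 0 < r := ha.trans hr2.1
    have hrt : Real.log a < Real.log r := Real.log_lt_log ha hr2.1
    set K := 1 / (Real.log a - Real.log r) with hK
    have hK0 : K < 0 := by rw [hK]; exact div_neg_of_pos_of_neg one_pos (by linarith)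
    have hKe : K * (Real.log r - Real.log a) = -1 := by
      have : Real.log a - Real.log r ≠ 0 := by linarith
      rw [hK]; field_simp; ring
    have := cmp_super hn hΓ ha hc hsup hwa hwb
      (prof_exp (Real.log a) (Real.log b) 0 η K (Real.log a)) (fun t _ => by
        refine muMinus_top hΓ hmu _ _ ?_
        have : 0 < η * (-K * Real.exp (K * (t - Real.log a))) := by
          have : 0 < -K := by linarith
          positivity
        nlinarith) (m := α) (by simp)
      (by have : 0 < η * Real.exp (K * (Real.log b - Real.log a)) := by positivity
          linarith) (x := r • u)
      (by change a ≤ ‖r • u‖ ∧ ‖r • u‖ ≤ b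
          rw [hnorm r hr0]; exact ⟨hr2.1.le, hr2.2.le⟩)
    rw [rad, hnorm r hr0, hKe] at this
    nlinarith [exp_half]

end

/-- **Solvability of the Dirichlet problem on an annulus, `μ_Γ⁺ < ∞`** (Proposition 3.4):
the Dirichlet problem for `λ(A[v]) ∈ ∂Γ` on `{a < |x| < b}` with constant boundary values
`α, β` has a (unique) continuous viscosity solution iff
(a) `β - α ∈ [-2(log b - log a), 0]`, or
(b) `β - α ∉ [-2(log b - log a), 0]` and `μ_Γ⁻ < +∞`. -/
theorem dirichlet_annulus_muPlus_finite
    {n : ℕ} (hn : 2 ≤ n) (Γ : Set (Fin n → ℝ)) (hΓ : CondC Γ)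
    (hmu : muPlus Γ ≠ ⊤)
    (a b : ℝ) (ha : 0 < a) (hab : a < b) (α β : ℝ)
    (A Abar : Set (Euc n))
    (hA : A = {x : Euc n | a < ‖x‖ ∧ ‖x‖ < b})
    (hAbar : Abar = {x : Euc n | a ≤ ‖x‖ ∧ ‖x‖ ≤ b})
    (Sol : (Euc n → ℝ) → Prop)
    (hSol : ∀ v, Sol v ↔ (ContinuousOn v Abar ∧ Supersol Γ A v ∧ Subsol Γ A v ∧
      (∀ x : Euc n, ‖x‖ = a → v x = α) ∧ (∀ x : Euc n, ‖x‖ = b → v x = β))) :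
    (∃ v, Sol v ∧ ∀ w, Sol w → Set.EqOn w v Abar) ↔
      (β - α ∈ Set.Icc (-2 * (Real.log b - Real.log a)) 0 ∨
        (β - α ∉ Set.Icc (-2 * (Real.log b - Real.log a)) 0 ∧ muMinus Γ < ⊤)) := by
  subst hA hAbar
  have hS : ∀ v, Sol v ↔ IsSol Γ a b α β v := hSol
  simp only [hS]
  have hlog : Real.log a < Real.log b := Real.log_lt_log ha hab
  constructor
  · rintro ⟨v, hv, -⟩
    by_cases h1 : β - α ∈ Set.Icc (-2 * (Real.log b - Real.log a)) 0
    · exact Or.inl h1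
    · by_cases h2 : muMinus Γ < ⊤
      · exact Or.inr ⟨h1, h2⟩
      · exact absurd (nonex hn hΓ h2 ha hab hv) h1
  · rintro (h | ⟨h1, h2⟩)
    · rcases h.2.lt_or_eq with h2 | h2
      · rcases h.1.lt_or_eq with h1 | h1
        · exact case_tanh hn hΓ hmu ha hab h1 h2
        · exact case_one hn hΓ hmu ha hab (σ := -1) (Or.inr rfl) (by linarith)
      · exact case_one hn hΓ hmu ha hab (σ := 1) (Or.inl rfl) (by linarith)
    · rcases lt_or_ge 0 (β - α) with h3 | h3
      · exact case_coth hn hΓ h2 ha hab (σ := 1) (Or.inl rfl) (by linarith)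
      · have h4 : β - α < -2 * (Real.log b - Real.log a) := by
          by_contra h5
          exact h1 ⟨not_lt.1 h5, h3⟩
        exact case_coth hn hΓ h2 ha hab (σ := -1) (Or.inr rfl) (by linarith)
end
end

section
/- Let n ≥ 2 and let Γ ⊂ ℝⁿ satisfy condition (C) with μ_Γ⁻ = +∞ (equivalently, (c,−1,…,−1) ∉ closure(Γ) for all c ∈ ℝ). Let 0 < a < b and suppose v is a continuous radially symmetric function (v(x) = v(|x|)) on the annulus {a < |x| < b} satisfying λ(A[v]) ∈ closure(Γ) there in the viscosity sense. Then r ↦ v(r) is non-increasing and r ↦ v(r) + 2·log r is non-decreasing on (a,b). -/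
open Filter Topology MeasureTheory Metric Set
open scoped BigOperators ENNReal NNReal

noncomputable section

lemma aux_antitone (f : ℝ → ℝ) (A B : ℝ) (hf : ContinuousOn f (Ioo A B))
    (h : ∀ t₀ ∈ Ioo A B, ∀ β M : ℝ,
      (∀ᶠ t in 𝓝 t₀, f t₀ + β * (t - t₀) - M * (t - t₀) ^ 2 ≤ f t) → β ≤ 0)
    (t₁ t₂ : ℝ) (h1 : A < t₁) (h12 : t₁ < t₂) (h2 : t₂ < B) : f t₂ ≤ f t₁ := by
  by_contra! hlt
  have hsub : Icc t₁ t₂ ⊆ Ioo A B := fun t ht => ⟨h1.trans_le ht.1, ht.2.trans_lt h2⟩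
  obtain ⟨c, hc1, hc2, hfc⟩ : ∃ c, t₁ < c ∧ c < t₂ ∧ f c < f t₂ := by
    have hcat : ContinuousAt f t₁ := hf.continuousAt (Ioo_mem_nhds h1 (h12.trans h2))
    have e1 : ∀ᶠ t in 𝓝[>] t₁, f t < f t₂ :=
      (hcat.eventually_lt_const hlt).filter_mono nhdsWithin_le_nhds
    have e2 : ∀ᶠ t in 𝓝[>] t₁, t ∈ Ioo t₁ t₂ := Ioo_mem_nhdsGT h12
    obtain ⟨c, hc, hc'⟩ := (e1.and e2).exists
    exact ⟨c, hc'.1, hc'.2, hc⟩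
  obtain ⟨ε, hε, hε2⟩ : ∃ ε : ℝ, 0 < ε ∧ ε / (c - t₁) < f t₂ - f c := by
    refine ⟨(f t₂ - f c) / 2 * (c - t₁), by apply mul_pos <;> linarith, ?_⟩
    rw [mul_div_cancel_right₀ _ (by linarith)]
    linarith
  obtain ⟨z, hz, hzmin⟩ := isCompact_Icc.exists_isMinOn (nonempty_Icc.2 h12.le) (hf.mono hsub)
  set m := f z
  have hm : ∀ t ∈ Icc t₁ t₂, m ≤ f t := fun t ht => hzmin ht
  set K := f c + ε / (c - t₁) - m + 1 with hK
  have hcpos : 0 < c - t₁ := by linarith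
  have hKgt : ε / (c - t₁) < K := by
    have := hm c ⟨hc1.le, hc2.le⟩
    linarith
  have hKpos : 0 < K := (div_pos hε hcpos).trans hKgt
  set d := t₁ + ε / K with hd
  have hd1 : t₁ < d := by have := div_pos hε hKpos; linarith
  have hdc : d < c := by
    have : ε / K < c - t₁ := by
      rw [div_lt_iff₀ hcpos] at hKgt
      rw [div_lt_iff₀ hKpos]; linarith
    linarith
  have hFd : ε / (d - t₁) = K := by
    rw [hd, add_sub_cancel_left]; field_simp
  have hsub2 : Icc d t₂ ⊆ Icc t₁ t₂ := Icc_subset_Icc_left hd1.le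
  have hFc : ContinuousOn (fun t => f t + ε / (t - t₁)) (Icc d t₂) := by
    refine (hf.mono (hsub2.trans hsub)).add (continuousOn_const.div (by fun_prop) ?_)
    intro t ht
    have := ht.1
    linarith
  obtain ⟨t₀, ht₀, hmin⟩ := isCompact_Icc.exists_isMinOn (nonempty_Icc.2 (hdc.trans hc2).le) hFc
  have hmin' : ∀ t ∈ Icc d t₂, f t₀ + ε / (t₀ - t₁) ≤ f t + ε / (t - t₁) := fun t ht => hmin ht
  have hcc := hmin' c ⟨hdc.le, hc2.le⟩
  have n1 : t₀ ≠ d := by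
    intro e
    have := hm d ⟨hd1.le, (hdc.trans hc2).le⟩
    rw [e, hFd] at hcc
    linarith
  have n2 : t₀ ≠ t₂ := by
    intro e
    rw [e] at hcc
    have : 0 < ε / (t₂ - t₁) := div_pos hε (by linarith)
    linarith
  have l1 : d < t₀ := lt_of_le_of_ne ht₀.1 (Ne.symm n1)
  have l2 : t₀ < t₂ := lt_of_le_of_ne ht₀.2 n2
  have s0 : 0 < t₀ - t₁ := by linarith
  have key := h t₀ (hsub (hsub2 ht₀)) (ε / (t₀ - t₁) ^ 2) (2 * ε / (t₀ - t₁) ^ 3) (by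
    have e1 : ∀ᶠ t in 𝓝 t₀, t ∈ Ioo d t₂ := Ioo_mem_nhds l1 l2
    have e2 : ∀ᶠ t in 𝓝 t₀, t₁ + (t₀ - t₁) / 2 < t := lt_mem_nhds (by linarith)
    filter_upwards [e1, e2] with t k1 k2
    have hm1 := hmin' t ⟨k1.1.le, k1.2.le⟩
    obtain ⟨s, hs⟩ : ∃ s, s = t - t₁ := ⟨_, rfl⟩
    obtain ⟨q, hq⟩ : ∃ q, q = t₀ - t₁ := ⟨_, rfl⟩
    have hts : t - t₀ = s - q := by rw [hs, hq]; ring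
    rw [hts, ← hq]
    rw [← hs, ← hq] at hm1
    have hs2 : q / 2 < s := by rw [hs, hq]; linarith
    have hq0 : 0 < q := by rw [hq]; exact s0
    have hs0 : 0 < s := by linarith
    have id1 : ε / q - ε / s - (ε / q ^ 2 * (s - q) - 2 * ε / q ^ 3 * (s - q) ^ 2)
        = ε * (s - q) ^ 2 * (2 * s - q) / (q ^ 3 * s) := by
      field_simp
      ring
    have : 0 ≤ ε * (s - q) ^ 2 * (2 * s - q) / (q ^ 3 * s) := by
      have : 0 ≤ 2 * s - q := by linarith
      positivity
    linarith)
  have : 0 < ε / (t₀ - t₁) ^ 2 := by positivity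
  linarith

lemma aux_mono (f : ℝ → ℝ) (A B : ℝ) (hA : 0 < A) (hf : ContinuousOn f (Ioo A B))
    (h : ∀ t₀ ∈ Ioo A B, ∀ β M : ℝ,
      (∀ᶠ t in 𝓝 t₀, f t₀ + β * (t - t₀) - M * (t - t₀) ^ 2 ≤ f t) → -1 / t₀ ≤ β)
    (t₁ t₂ : ℝ) (h1 : A < t₁) (h12 : t₁ < t₂) (h2 : t₂ < B) :
    f t₁ + Real.log t₁ ≤ f t₂ + Real.log t₂ := by
  have := aux_antitone (fun s => f (-s) + Real.log (-s)) (-B) (-A) ?_ ?_ (-t₂) (-t₁)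
    (by linarith) (by linarith) (by linarith)
  · simpa using this
  · have hmaps : MapsTo (fun s : ℝ => -s) (Ioo (-B) (-A)) (Ioo A B) := fun s hs =>
      ⟨by linarith [hs.2], by linarith [hs.1]⟩
    refine (hf.comp continuousOn_neg hmaps).add (ContinuousOn.log continuousOn_neg ?_)
    intro s hs
    have := hs.2
    linarith
  · intro s₀ hs₀ β M hev
    have p0 : 0 < -s₀ := by linarith [hs₀.2]
    have := h (-s₀) ⟨by linarith [hs₀.2], by linarith [hs₀.1]⟩ (-(β + 1 / (-s₀))) M (by
      have ht : Tendsto (fun t : ℝ => -t) (𝓝 (-s₀)) (𝓝 s₀) := by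
        simpa using (continuous_neg.tendsto (-s₀) : Tendsto (fun t : ℝ => -t) _ _)
      filter_upwards [ht.eventually hev, lt_mem_nhds p0] with t k1 k2
      simp only [neg_neg] at k1
      have hl : Real.log t - Real.log (-s₀) ≤ 1 / (-s₀) * (t - -s₀) := by
        have := Real.log_le_sub_one_of_pos (div_pos k2 p0)
        rw [Real.log_div k2.ne' p0.ne'] at this
        have e : 1 / (-s₀) * (t - -s₀) = t / -s₀ - 1 := by
          have : s₀ ≠ 0 := by linarith
          field_simp
          ring
        linarith
      nlinarith)
    have e : -1 / (-s₀) = -(1 / (-s₀)) := by ring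
    linarith

lemma eig_perm {n : ℕ} (d : Fin n → ℝ) (hM : (Matrix.diagonal d).IsHermitian) :
    ∃ σ : Equiv.Perm (Fin n), hM.eigenvalues ∘ σ = d := by
  have h1 := hM.roots_charpoly_eq_eigenvalues
  have h2 : (∏ i, (Polynomial.X - Polynomial.C (d i))).roots = Multiset.map d Finset.univ.val := by
    have := Polynomial.roots_multiset_prod_X_sub_C (Multiset.map d Finset.univ.val)
    rw [Multiset.map_map] at this
    exact this
  rw [Matrix.charpoly_diagonal, h2] at h1
  have h3 : Multiset.map d Finset.univ.val = Multiset.map hM.eigenvalues Finset.univ.val := by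
    rw [h1]; rfl
  have hcard : ∀ c : ℝ, Fintype.card {i // d i = c} = Fintype.card {i // hM.eigenvalues i = c} := by
    intro c
    have := congrArg (Multiset.count c) h3
    rw [Multiset.count_map, Multiset.count_map] at this
    rw [Fintype.card_subtype, Fintype.card_subtype]
    simp only [Finset.card, Finset.filter_val]
    simpa only [eq_comm] using this
  let e : ∀ c, {i // d i = c} ≃ {i // hM.eigenvalues i = c} := fun c =>
    Fintype.equivOfCardEq (hcard c)
  refine ⟨(Equiv.sigmaFiberEquiv d).symm.trans
    ((Equiv.sigmaCongrRight e).trans (Equiv.sigmaFiberEquiv hM.eigenvalues)), ?_⟩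
  funext i
  exact (e (d i) ⟨i, rfl⟩).2

lemma cl_smul {n : ℕ} {Γ : Set (Fin n → ℝ)} (hΓ : CondC Γ) {l : Fin n → ℝ}
    (hl : l ∈ closure Γ) {t : ℝ} (ht : 0 < t) : t • l ∈ closure Γ :=
  map_mem_closure (continuous_const_smul t) hl (fun x hx => hΓ.2.2.2.2.1 x hx t ht)

lemma cl_perm {n : ℕ} {Γ : Set (Fin n → ℝ)} (hΓ : CondC Γ) {l : Fin n → ℝ}
    (hl : l ∈ closure Γ) (σ : Equiv.Perm (Fin n)) : l ∘ σ ∈ closure Γ :=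
  map_mem_closure (f := fun l : Fin n → ℝ => l ∘ σ) (by fun_prop) hl
    (fun x hx => hΓ.2.2.2.1 σ x hx)

def testF {n : ℕ} (α β M t₀ : ℝ) (x : Euc n) : ℝ :=
  α + β * (‖x‖ ^ 2 - t₀) - M * (‖x‖ ^ 2 - t₀) ^ 2

lemma testF_contDiff {n : ℕ} (α β M t₀ : ℝ) : ContDiff ℝ 2 (testF (n := n) α β M t₀) := by
  unfold testF
  have := contDiff_norm_sq ℝ (E := Euc n) (n := 2)
  fun_prop

lemma fderiv_testF {n : ℕ} (α β M t₀ : ℝ) (x : Euc n) (j : Fin n) :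
    fderiv ℝ (testF α β M t₀) x (EuclideanSpace.single j 1)
      = 2 * (β - 2 * M * (‖x‖ ^ 2 - t₀)) * x j := by
  have h := (hasStrictFDerivAt_norm_sq x).hasFDerivAt
  have h2 := h.sub_const t₀
  have h3 := ((h2.const_mul β).const_add α).sub ((h2.pow 2).const_mul M)
  have : HasFDerivAt (testF α β M t₀) _ x := h3
  rw [this.fderiv]
  simp [EuclideanSpace.inner_single_right]
  ring

lemma phess_testF {n : ℕ} (α β M t₀ : ℝ) (x : Euc n) (i j : Fin n) (hx : ‖x‖ ^ 2 = t₀) :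
    phess (testF α β M t₀) x i j
      = 2 * β * (if i = j then 1 else 0) - 8 * M * x i * x j := by
  unfold phess
  simp only [fderiv_testF]
  have h := (hasStrictFDerivAt_norm_sq x).hasFDerivAt
  have hj : HasFDerivAt (fun y : Euc n => y j) (EuclideanSpace.proj (𝕜 := ℝ) j : Euc n →L[ℝ] ℝ) x :=
    (EuclideanSpace.proj (𝕜 := ℝ) j : Euc n →L[ℝ] ℝ).hasFDerivAt
  have h3 := ((((h.sub_const t₀).const_mul (2 * M)).const_sub β).const_mul 2).mul hj
  have h4 : HasFDerivAt (fun y : Euc n => 2 * (β - 2 * M * (‖y‖ ^ 2 - t₀)) * y j) _ x := h3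
  rw [h4.fderiv]
  have : (if j = i then (1:ℝ) else 0) = if i = j then 1 else 0 := by simp only [eq_comm]
  simp [EuclideanSpace.inner_single_right, hx, Pi.single_apply, this]
  split_ifs <;> ring

lemma test_neg {n : ℕ} (hn : 2 ≤ n) {Γ : Set (Fin n → ℝ)} (hΓ : CondC Γ)
    (hmu : ∀ c : ℝ, (fun i : Fin n => if i.val = 0 then c else -1) ∉ closure Γ)
    (r α β M : ℝ)
    (hE : EigIn (mobius (testF α β M (r ^ 2))
      (EuclideanSpace.single (⟨0, by omega⟩ : Fin n) r : Euc n)) (closure Γ)) :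
    0 ≤ -2 * β - 2 * β ^ 2 * r ^ 2 := by
  by_contra! hneg
  set x : Euc n := EuclideanSpace.single (⟨0, by omega⟩ : Fin n) r with hx
  have hxn : ‖x‖ ^ 2 = r ^ 2 := by simp [hx]
  have hxi : ∀ i : Fin n, x i = if i.val = 0 then r else 0 := by
    intro i
    simp [hx, Pi.single_apply, Fin.ext_iff]
  set q := -2 * β - 2 * β ^ 2 * r ^ 2 with hq
  set E := Real.exp (-2 * testF α β M (r ^ 2) x) with hEE
  set p := 8 * M + 4 * β ^ 2
  have hg : ∀ i, pgrad (testF α β M (r ^ 2)) x i = 2 * β * x i := by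
    intro i
    unfold pgrad
    rw [fderiv_testF, hxn]; ring
  have hsum : ∑ k, (pgrad (testF α β M (r ^ 2)) x k) ^ 2 = 4 * β ^ 2 * r ^ 2 := by
    simp only [hg, mul_pow]
    rw [← Finset.mul_sum, ← EuclideanSpace.real_norm_sq_eq, hxn]; ring
  have hmat : mobius (testF α β M (r ^ 2)) x
      = Matrix.diagonal (fun i : Fin n => E * (if i.val = 0 then q + p * r ^ 2 else q)) := by
    have hp : p = 8 * M + 4 * β ^ 2 := rfl
    ext i j
    simp only [mobius, Matrix.smul_apply, Matrix.of_apply, hsum]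
    simp only [hg, phess_testF _ _ _ _ _ _ _ hxn,
      Matrix.diagonal_apply, smul_eq_mul, ← hEE, hxi]
    by_cases hij : i = j
    · subst hij
      by_cases hi : i.val = 0
      · simp only [hi, if_true, hq, hp]; ring
      · simp only [hi, if_true, if_false, hq]; ring
    · have : ¬ (i.val = 0 ∧ j.val = 0) := fun h => hij (Fin.ext (by omega))
      by_cases hi : i.val = 0
      · have hj : ¬ j.val = 0 := fun h => this ⟨hi, h⟩
        simp [hij, hj]
      · simp [hij, hi]
  rw [hmat] at hE
  obtain ⟨hM, hmem⟩ := hE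
  obtain ⟨σ, hσ⟩ := eig_perm _ hM
  have h1 := cl_perm hΓ hmem σ
  rw [hσ] at h1
  have hEpos : 0 < E := Real.exp_pos _
  have ht : 0 < 1 / (E * (-q)) := by
    have : 0 < -q := by linarith
    positivity
  have h2 := cl_smul hΓ h1 ht
  apply hmu ((q + p * r ^ 2) / (-q))
  convert h2 using 1
  funext i
  have hq0 : q ≠ 0 := hneg.ne
  by_cases hi : i.val = 0
  · simp [hi]; field_simp
  · simp [hi]; field_simp

/-- **Monotonicity of radial supersolutions when `μ_Γ⁻ = ∞`** (Lemma 3.8): if `Γ` satisfies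
condition (C) and `(c,-1,…,-1) ∉ closure Γ` for all `c`, then every continuous radially
symmetric viscosity supersolution `v` of `λ(A[v]) ∈ ∂Γ` on the annulus `{a < |x| < b}`
is non-increasing in `r`, and `v + 2 log r` is non-decreasing in `r`. -/
theorem radial_supersolution_monotone
    {n : ℕ} (hn : 2 ≤ n) (Γ : Set (Fin n → ℝ)) (hΓ : CondC Γ)
    (hmu : ∀ c : ℝ, (fun i : Fin n => if i.val = 0 then c else -1) ∉ closure Γ)
    (a b : ℝ) (ha : 0 < a) (hab : a < b)
    (A : Set (Euc n)) (hA : A = {x : Euc n | a < ‖x‖ ∧ ‖x‖ < b})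
    (v : Euc n → ℝ) (hcont : ContinuousOn v A)
    (hrad : ∀ x y : Euc n, ‖x‖ = ‖y‖ → v x = v y)
    (hsup : Supersol Γ A v) :
    ∀ x y : Euc n, a < ‖x‖ → ‖x‖ ≤ ‖y‖ → ‖y‖ < b →
      v y ≤ v x ∧ v x + 2 * Real.log ‖x‖ ≤ v y + 2 * Real.log ‖y‖ := by
  intro x y hax hxy hyb
  rcases hxy.eq_or_lt with heq | hlt
  · rw [hrad x y heq, heq]; exact ⟨le_rfl, le_rfl⟩
  set γ : ℝ → Euc n := fun t => EuclideanSpace.single (⟨0, by omega⟩ : Fin n) (Real.sqrt t) with hγ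
  have hγn : ∀ t, ‖γ t‖ = Real.sqrt t := by
    intro t
    simp [hγ, abs_of_nonneg (Real.sqrt_nonneg t)]
  have hγc : Continuous γ := by
    have : ∀ t : ℝ, γ t = Real.sqrt t • EuclideanSpace.single (⟨0, by omega⟩ : Fin n) (1 : ℝ) := by
      intro t
      ext i
      simp [hγ, Pi.single_apply]
    have h1 : γ = fun t => Real.sqrt t • EuclideanSpace.single (⟨0, by omega⟩ : Fin n) (1 : ℝ) :=
      funext this
    rw [h1]
    exact Real.continuous_sqrt.smul continuous_const
  have hγA : ∀ t ∈ Ioo (a ^ 2) (b ^ 2), γ t ∈ A := by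
    intro t ht
    rw [hA]
    refine ⟨?_, ?_⟩
    · rw [hγn]; exact Real.lt_sqrt_of_sq_lt ht.1
    · rw [hγn, Real.sqrt_lt' (by linarith)]; exact ht.2
  set f : ℝ → ℝ := fun t => v (γ t) with hf
  have hvf : ∀ z : Euc n, v z = f (‖z‖ ^ 2) := by
    intro z
    apply hrad
    rw [hγn, Real.sqrt_sq (norm_nonneg z)]
  have hfc : ContinuousOn f (Ioo (a ^ 2) (b ^ 2)) := hcont.comp hγc.continuousOn hγA
  have key : ∀ t₀ ∈ Ioo (a ^ 2) (b ^ 2), ∀ β M : ℝ,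
      (∀ᶠ t in 𝓝 t₀, f t₀ + β * (t - t₀) - M * (t - t₀) ^ 2 ≤ f t) →
        0 ≤ -2 * β - 2 * β ^ 2 * t₀ := by
    intro t₀ ht₀ β M hev
    have ht0 : 0 ≤ t₀ := (sq_nonneg a).trans ht₀.1.le
    have hs : Real.sqrt t₀ ^ 2 = t₀ := Real.sq_sqrt ht0
    have hn2 : ‖γ t₀‖ ^ 2 = t₀ := by rw [hγn, hs]
    have := test_neg hn hΓ hmu (Real.sqrt t₀) (f t₀) β M (by
      refine hsup (γ t₀) (hγA t₀ ht₀) _ (testF_contDiff _ _ _ _) ?_ ?_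
      · simp [testF, hn2, hs, hf]
      · have ht : Tendsto (fun z : Euc n => ‖z‖ ^ 2) (𝓝 (γ t₀)) (𝓝 t₀) := by
          have : Continuous fun z : Euc n => ‖z‖ ^ 2 := by fun_prop
          have := this.tendsto (γ t₀)
          rwa [hn2] at this
        refine Filter.Eventually.filter_mono nhdsWithin_le_nhds ?_
        filter_upwards [ht.eventually hev] with z hz
        rw [hvf z, testF, hs]
        exact hz)
    rwa [hs] at this
  have hx1 : a ^ 2 < ‖x‖ ^ 2 := by gcongr
  have hy1 : ‖x‖ ^ 2 < ‖y‖ ^ 2 := by gcongr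
  have hb1 : ‖y‖ ^ 2 < b ^ 2 := by gcongr
  have ha2 : 0 < a ^ 2 := by positivity
  refine ⟨?_, ?_⟩
  · rw [hvf x, hvf y]
    refine aux_antitone f _ _ hfc ?_ _ _ hx1 hy1 hb1
    intro t₀ ht₀ β M hev
    have := key t₀ ht₀ β M hev
    have h0 : 0 ≤ β ^ 2 * t₀ := mul_nonneg (sq_nonneg _) (ha2.trans ht₀.1).le
    linarith
  · rw [hvf x, hvf y]
    have := aux_mono f _ _ ha2 hfc ?_ _ _ hx1 hy1 hb1
    · simpa [Real.log_pow] using this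
    · intro t₀ ht₀ β M hev
      have h1 := key t₀ ht₀ β M hev
      have h0 : 0 < t₀ := ha2.trans ht₀.1
      rw [div_le_iff₀ h0]
      by_contra! hc
      have : β < 0 := by
        by_contra! hb
        have := mul_nonneg hb h0.le
        linarith
      nlinarith
end
end

section
/- Let n ≥ 2, let Γ ⊂ ℝⁿ satisfy condition (C) with λ* = (1,−1,…,−1) ∉ closure(Γ), and let B be the open unit ball of ℝⁿ. Suppose v satisfies λ(A[v]) ∈ closure(Γ) in B∖{0} in the viscosity sense. Then liminf_{x→0} v(x) > −∞, and if one sets v(0) := liminf_{x→0} v(x) (possibly +∞), then v is lower semi-continuous on B and is lowerconical at 0. -/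
open Filter Topology MeasureTheory Metric Set
open scoped BigOperators ENNReal NNReal Classical

noncomputable section

/-- Viscosity supersolution of `λ(A[v]) ∈ ∂Γ` in `Ω`, i.e. `λ(A[v]) ∈ closure Γ` in the
viscosity sense, for an extended-real-valued `v`. -/
def SupersolE {n : ℕ} (Γ : Set (Fin n → ℝ)) (Ω : Set (Euc n)) (v : Euc n → EReal) : Prop :=
  ∀ x₀ ∈ Ω, ∀ φ : Euc n → ℝ, ContDiff ℝ 2 φ → (φ x₀ : EReal) = v x₀ →
    (∀ᶠ x in 𝓝[Ω] x₀, (φ x : EReal) ≤ v x) → EigIn (mobius φ x₀) (closure Γ)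

/-- Viscosity subsolution of `λ(A[v]) ∈ ∂Γ` in `Ω`, i.e. `λ(A[v]) ∈ ℝⁿ ∖ Γ` in the
viscosity sense, for an extended-real-valued `v`. -/
def SubsolE {n : ℕ} (Γ : Set (Fin n → ℝ)) (Ω : Set (Euc n)) (v : Euc n → EReal) : Prop :=
  ∀ x₀ ∈ Ω, ∀ φ : Euc n → ℝ, ContDiff ℝ 2 φ → (φ x₀ : EReal) = v x₀ →
    (∀ᶠ x in 𝓝[Ω] x₀, v x ≤ (φ x : EReal)) → EigIn (mobius φ x₀) Γᶜ

/-- `v` is lowerconical at `x₀ ∈ Ω` (Caffarelli–Li–Nirenberg): either `v x₀ = +∞`, or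
`v x₀ < +∞` and for every `ε > 0` and every smooth `η`,
`inf_{x ∈ Ω} ((v-η)(x) - (v-η)(x₀) - ε|x-x₀|) < 0`. -/
def LowerConical {n : ℕ} (Ω : Set (Euc n)) (v : Euc n → EReal) (x₀ : Euc n) : Prop :=
  v x₀ = ⊤ ∨ (v x₀ ≠ ⊤ ∧ ∀ ε : ℝ, 0 < ε → ∀ η : Euc n → ℝ, ContDiff ℝ (⊤ : ℕ∞) η →
    ∃ x ∈ Ω, v x - (η x : EReal) <
      v x₀ - (η x₀ : EReal) + ((ε * ‖x - x₀‖ : ℝ) : EReal))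

/-- `v` is upperconical at `x₀ ∈ Ω` iff `-v` is lowerconical at `x₀`. -/
def UpperConical {n : ℕ} (Ω : Set (Euc n)) (v : Euc n → EReal) (x₀ : Euc n) : Prop :=
  LowerConical Ω (fun x => -(v x)) x₀

lemma closure_add_nonneg {n : ℕ} {Γ : Set (Fin n → ℝ)} (hΓ : CondC Γ) {lam mu : Fin n → ℝ}
    (h : lam ∈ closure Γ) (hle : ∀ i, lam i ≤ mu i) : mu ∈ closure Γ := by
  obtain ⟨-, -, -, -, -, hadd⟩ := hΓ
  have h1 : ∀ k : ℝ, 0 < k → mu + (fun _ => k) ∈ closure Γ := by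
    intro k hk
    have : MapsTo (fun l : Fin n → ℝ => l + (mu - lam + fun _ => k)) Γ Γ := by
      intro l hl
      apply hadd l hl
      intro i
      have := hle i
      simp only [Pi.add_apply, Pi.sub_apply]
      linarith
    have h2 := this.closure (by fun_prop) h
    convert h2 using 1
    ext i; simp only [Pi.add_apply, Pi.sub_apply]; ring
  have h3 : Tendsto (fun k : ℝ => mu + (fun _ : Fin n => k)) (𝓝[>] 0) (𝓝 mu) := by
    have : Continuous (fun k : ℝ => mu + (fun _ : Fin n => k)) := by fun_prop
    have h4 := this.tendsto 0
    have h5 : mu + (fun _ : Fin n => (0:ℝ)) = mu := by ext i; simp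
    rw [h5] at h4
    exact h4.mono_left nhdsWithin_le_nhds
  exact isClosed_closure.mem_of_tendsto h3
    (by filter_upwards [self_mem_nhdsWithin] with k hk using h1 k hk)

lemma closure_perm {n : ℕ} {Γ : Set (Fin n → ℝ)} (hΓ : CondC Γ) {lam : Fin n → ℝ}
    (h : lam ∈ closure Γ) (σ : Equiv.Perm (Fin n)) : lam ∘ σ ∈ closure Γ := by
  obtain ⟨-, -, -, hperm, -, -⟩ := hΓ
  have : MapsTo (fun l : Fin n → ℝ => l ∘ σ) Γ Γ := fun l hl => hperm σ l hl
  exact this.closure (by fun_prop) h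

lemma closure_smul_cone {n : ℕ} {Γ : Set (Fin n → ℝ)} (hΓ : CondC Γ) {lam : Fin n → ℝ}
    (h : lam ∈ closure Γ) {t : ℝ} (ht : 0 < t) : t • lam ∈ closure Γ := by
  obtain ⟨-, -, -, -, hcone, -⟩ := hΓ
  have : MapsTo (fun l : Fin n → ℝ => t • l) Γ Γ := fun l hl => hcone l hl t ht
  exact this.closure (by fun_prop) h

/-- the perturbed vector -/
def pert (n : ℕ) (θ : ℝ) : Fin n → ℝ := fun i =>
  -(2 * (1 - 4 * θ)) + 4 * (1 + θ) * (if i.val = 0 then 1 else 0)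

lemma exists_theta {n : ℕ} {Γ : Set (Fin n → ℝ)} (hΓ : CondC Γ)
    (hstar : lamStar n ∉ closure Γ) : ∃ θ : ℝ, 0 < θ ∧ θ < 1 / 4 ∧ pert n θ ∉ closure Γ := by
  have h0 : pert n 0 ∉ closure Γ := by
    intro h
    apply hstar
    have := closure_smul_cone hΓ h (t := 1 / 2) (by norm_num)
    convert this using 1
    ext i
    simp only [lamStar, pert, Pi.smul_apply, smul_eq_mul]
    split_ifs <;> norm_num
  have hc : Continuous (pert n) := by
    unfold pert; fun_prop
  have hev : ∀ᶠ θ in 𝓝 (0:ℝ), pert n θ ∉ closure Γ :=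
    (hc.continuousAt (x := 0)).eventually (isClosed_closure.isOpen_compl.mem_nhds h0)
  have h2 : ∀ᶠ θ in 𝓝 (0:ℝ), θ < 1 / 4 := eventually_lt_nhds (by norm_num)
  have h3 : ∀ᶠ θ in 𝓝[>] (0:ℝ), 0 < θ := self_mem_nhdsWithin
  obtain ⟨θ, ⟨a, b⟩, c⟩ := (((hev.and h2).filter_mono nhdsWithin_le_nhds).and h3).exists
  exact ⟨θ, c, b, a⟩

open Matrix in
lemma eig_bound {n : ℕ} (hn : 0 < n) {M : Matrix (Fin n) (Fin n) ℝ} (hM : M.IsHermitian)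
    {a b : ℝ} (hb : 0 ≤ b) {e : Fin n → ℝ} (he : e ⬝ᵥ e = 1)
    (h : ∀ y : Fin n → ℝ, y ⬝ᵥ M *ᵥ y ≤ -a * (y ⬝ᵥ y) + b * (e ⬝ᵥ y) ^ 2) :
    ∃ i₀, ∀ i, hM.eigenvalues i ≤ -a + b * (if i = i₀ then 1 else 0) := by
  set u : Fin n → Fin n → ℝ := fun i => (hM.eigenvectorBasis i).ofLp with hu
  have hMu : ∀ i, M *ᵥ u i = hM.eigenvalues i • u i := fun i => hM.mulVec_eigenvectorBasis i
  have horth : ∀ i j, u i ⬝ᵥ u j = if i = j then 1 else 0 := by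
    intro i j
    have := orthonormal_iff_ite.1 hM.eigenvectorBasis.orthonormal j i
    rw [EuclideanSpace.inner_eq_star_dotProduct] at this
    simp only [star_trivial] at this
    rw [hu]
    simp only
    rw [this]
    simp [eq_comm]
  have : Nonempty (Fin n) := ⟨⟨0, hn⟩⟩
  obtain ⟨i₀, hi₀⟩ := Finite.exists_max hM.eigenvalues
  refine ⟨i₀, fun i => ?_⟩
  by_cases hi : i = i₀
  · have h1 := h (u i)
    rw [hMu, dotProduct_smul, horth] at h1
    have h2 : (e ⬝ᵥ u i) ^ 2 ≤ 1 := by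
      have h3 : 0 ≤ (u i - (e ⬝ᵥ u i) • e) ⬝ᵥ (u i - (e ⬝ᵥ u i) • e) := by
        simp only [dotProduct]
        exact Finset.sum_nonneg fun j _ => mul_self_nonneg _
      simp only [sub_dotProduct, dotProduct_sub, smul_dotProduct, dotProduct_smul, horth, he,
        dotProduct_comm (u i) e, smul_eq_mul, if_true] at h3
      nlinarith
    simp only [if_true, smul_eq_mul, mul_one] at h1
    simp only [hi, if_true]
    rw [hi] at h1 h2
    nlinarith
  · simp only [hi, if_false, mul_zero, add_zero]
    obtain ⟨α, γ, hαγ, hz⟩ : ∃ α γ : ℝ, α ^ 2 + γ ^ 2 > 0 ∧ α * (e ⬝ᵥ u i) + γ * (e ⬝ᵥ u i₀) = 0 := by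
      by_cases h0 : e ⬝ᵥ u i₀ = 0
      · exact ⟨0, 1, by norm_num, by simp [h0]⟩
      · refine ⟨e ⬝ᵥ u i₀, -(e ⬝ᵥ u i), ?_, by ring⟩
        positivity
    have h1 := h (α • u i + γ • u i₀)
    have hi' : i₀ ≠ i := fun h => hi h.symm
    simp only [mulVec_add, mulVec_smul, hMu, add_dotProduct, dotProduct_add, smul_dotProduct,
      dotProduct_smul, horth, smul_eq_mul, hi, hi', if_true, if_false, hz] at h1
    have h2 := hi₀ i
    have h3 : (α ^ 2 + γ ^ 2) * hM.eigenvalues i ≤ (α ^ 2 + γ ^ 2) * (-a) := by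
      nlinarith [mul_nonneg (sq_nonneg γ) (sub_nonneg.2 h2)]
    exact le_of_mul_le_mul_left h3 hαγ

open Matrix in
lemma not_eigIn {n : ℕ} (hn : 0 < n) {Γ : Set (Fin n → ℝ)} (hΓ : CondC Γ) {θ : ℝ}
    (hθ : 0 < θ) (hp : pert n θ ∉ closure Γ) {M : Matrix (Fin n) (Fin n) ℝ}
    {t : ℝ} (ht : 0 < t) {e : Fin n → ℝ} (he : e ⬝ᵥ e = 1)
    (h : ∀ y : Fin n → ℝ, y ⬝ᵥ M *ᵥ y ≤
      t * (-(2 * (1 - 4 * θ)) * (y ⬝ᵥ y) + 4 * (1 + θ) * (e ⬝ᵥ y) ^ 2)) :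
    ¬ EigIn M (closure Γ) := by
  rintro ⟨hM, hin⟩
  obtain ⟨i₀, hi₀⟩ := eig_bound hn hM (a := t * (2 * (1 - 4 * θ))) (b := t * (4 * (1 + θ)))
    (by positivity) he (fun y => (h y).trans (le_of_eq (by ring)))
  apply hp
  have h1 := closure_add_nonneg hΓ hin hi₀
  have h2 := closure_perm hΓ h1 (Equiv.swap i₀ ⟨0, hn⟩)
  have h3 := closure_smul_cone hΓ h2 (inv_pos.2 ht)
  convert h3 using 1
  ext i
  have : Equiv.swap i₀ ⟨0, hn⟩ i = i₀ ↔ i.val = 0 := by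
    rw [Equiv.swap_apply_eq_iff, Equiv.swap_apply_left, Fin.ext_iff]
  simp only [pert, Pi.smul_apply, Function.comp, smul_eq_mul, this]
  field_simp

lemma one_dim {θ μ ε s₀ : ℝ} (hθ : 0 < θ) (hμ : 0 < μ) (hε : 0 < ε) (hs : 0 < s₀)
    (hy : 0 < 1 - ε * s₀ ^ (-θ)) : ∃ b d : ℝ, μ ≤ b ∧
      -d * s₀ ≤ (1 + θ) * b + θ * b ^ 2 * s₀ ∧
      ∀ᶠ s in 𝓝 s₀, b * (s - s₀) + d / 2 * (s - s₀) ^ 2 ≤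
        (μ * s + (1 / θ) * Real.log (1 - ε * s ^ (-θ))) -
        (μ * s₀ + (1 / θ) * Real.log (1 - ε * s₀ ^ (-θ))) := by
  set y : ℝ → ℝ := fun s => 1 - ε * s ^ (-θ) with hydef
  set ℓ : ℝ → ℝ := fun s => ε * s ^ (-θ - 1) / y s with hℓ
  have hder_y : ∀ s, 0 < s → HasDerivAt y (θ * ε * s ^ (-θ - 1)) s := by
    intro s hs
    have := ((Real.hasDerivAt_rpow_const (p := -θ) (Or.inl hs.ne')).const_mul ε).const_sub 1
    refine this.congr_deriv ?_
    ring
  have hder_L : ∀ s, 0 < s → 0 < y s →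
      HasDerivAt (fun s => (1 / θ) * Real.log (y s)) (ℓ s) s := by
    intro s hs hys
    have := ((hder_y s hs).log hys.ne').const_mul (1 / θ)
    refine this.congr_deriv ?_
    simp only [hℓ]
    field_simp
  have hder_l : HasDerivAt ℓ (-θ * ℓ s₀ ^ 2 - (1 + θ) * ℓ s₀ / s₀) s₀ := by
    have h1 := ((Real.hasDerivAt_rpow_const (x := s₀) (p := -θ - 1) (Or.inl hs.ne')).const_mul ε)
    have := h1.div (hder_y s₀ hs) hy.ne'
    refine this.congr_deriv ?_
    simp only [hℓ]
    have e1 : s₀ ^ (-θ - 1 - 1) = s₀ ^ (-θ - 1) / s₀ := Real.rpow_sub_one hs.ne' _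
    have hy' : y s₀ ≠ 0 := hy.ne'
    rw [e1]
    field_simp
    ring
  have hev : ∀ᶠ s in 𝓝 s₀, 0 < s ∧ 0 < y s :=
    (eventually_gt_nhds hs).and ((hder_y s₀ hs).continuousAt.eventually (eventually_gt_nhds hy))
  have hℓpos : 0 < ℓ s₀ := by
    have : 0 < y s₀ := hy
    simp only [hℓ]; positivity
  set b := μ + ℓ s₀ with hb
  set κ := μ / s₀ with hκ
  set d := -θ * ℓ s₀ ^ 2 - (1 + θ) * ℓ s₀ / s₀ - κ with hd
  refine ⟨b, d, by linarith, ?_, ?_⟩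
  · have e1 : -d * s₀ = θ * ℓ s₀ ^ 2 * s₀ + (1 + θ) * ℓ s₀ + μ := by
      rw [hd, hκ]; field_simp; ring
    rw [e1, hb]
    have h2 : 0 ≤ θ * s₀ * (μ ^ 2 + 2 * μ * ℓ s₀) := by positivity
    nlinarith [mul_pos hθ hμ]
  · set g : ℝ → ℝ := fun s => (μ * s + (1 / θ) * Real.log (y s)) -
      (b * (s - s₀) + d / 2 * (s - s₀) ^ 2) with hg
    have hg1 : ∀ s, 0 < s → 0 < y s → HasDerivAt g (μ + ℓ s - (b + d * (s - s₀))) s := by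
      intro s hs1 hs2
      have h1 := ((hasDerivAt_id s).const_mul μ).add (hder_L s hs1 hs2)
      have h2 := (((hasDerivAt_id s).sub_const s₀).const_mul b).add
        ((((hasDerivAt_id s).sub_const s₀).pow 2).const_mul (d / 2))
      have := h1.sub h2
      refine this.congr_deriv ?_
      simp; ring
    have hg2 : deriv g =ᶠ[𝓝 s₀] fun s => μ + ℓ s - (b + d * (s - s₀)) := by
      filter_upwards [hev] with s hs1 using (hg1 s hs1.1 hs1.2).deriv
    have hg3 : deriv (deriv g) s₀ = κ := by
      rw [hg2.deriv_eq]
      have h1 := (hder_l.const_add μ).sub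
        ((((hasDerivAt_id s₀).sub_const s₀).const_mul d).const_add b)
      have h2 := h1.deriv
      simp only [mul_one] at h2
      refine Eq.trans ?_ (h2.trans ?_)
      · rfl
      · rw [hd]; ring
    have hmin : IsLocalMin g s₀ := by
      apply isLocalMin_of_deriv_deriv_pos
      · rw [hg3]; positivity
      · rw [hg2.self_of_nhds, hb]; ring
      · exact (hg1 s₀ hs hy).continuousAt
    filter_upwards [hmin] with s hs1
    simp only [hg, sub_self] at hs1
    simp only [hydef] at hs1
    nlinarith

/-- test function -/
def tst {n : ℕ} (p x₀ : Euc n) (a b d : ℝ) (x : Euc n) : ℝ :=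
  a + inner ℝ p (x - x₀) + b * (‖x‖ ^ 2 - ‖x₀‖ ^ 2) + d / 2 * (‖x‖ ^ 2 - ‖x₀‖ ^ 2) ^ 2

lemma tst_contDiff {n : ℕ} (p x₀ : Euc n) (a b d : ℝ) : ContDiff ℝ 2 (tst p x₀ a b d) := by
  have h1 : ContDiff ℝ 2 (fun x : Euc n => ‖x‖ ^ 2) := contDiff_norm_sq ℝ
  have h2 : ContDiff ℝ 2 (fun x : Euc n => inner ℝ p (x - x₀)) :=
    contDiff_const.inner ℝ (contDiff_id.sub contDiff_const)
  unfold tst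
  exact ((contDiff_const.add h2).add (contDiff_const.mul (h1.sub contDiff_const))).add
    (contDiff_const.mul ((h1.sub contDiff_const).pow 2))

lemma tst_fderiv {n : ℕ} (p x₀ : Euc n) (a b d : ℝ) (x y : Euc n) :
    fderiv ℝ (tst p x₀ a b d) x y =
      inner ℝ p y + (2 * b + 2 * d * (‖x‖ ^ 2 - ‖x₀‖ ^ 2)) * inner ℝ x y := by
  have h1 := (hasStrictFDerivAt_norm_sq x).hasFDerivAt
  have h2 : HasFDerivAt (fun x : Euc n => inner ℝ p (x - x₀)) (innerSL ℝ p) x :=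
    (innerSL ℝ p).hasFDerivAt.comp x ((hasFDerivAt_id x).sub_const x₀)
  have h3 := ((h2.const_add a).add ((h1.sub_const (‖x₀‖ ^ 2)).const_mul b)).add
    (((h1.sub_const (‖x₀‖ ^ 2)).pow 2).const_mul (d / 2))
  have h4 : HasFDerivAt (tst p x₀ a b d) _ x := h3
  rw [h4.fderiv]
  simp
  ring

lemma tst_pgrad {n : ℕ} (p x₀ : Euc n) (a b d : ℝ) (i : Fin n) :
    pgrad (tst p x₀ a b d) x₀ i = p i + 2 * b * x₀ i := by
  unfold pgrad
  rw [tst_fderiv]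
  simp [EuclideanSpace.inner_single_right]

lemma tst_phess {n : ℕ} (p x₀ : Euc n) (a b d : ℝ) (i j : Fin n) :
    phess (tst p x₀ a b d) x₀ i j =
      2 * b * (if i = j then 1 else 0) + 4 * d * x₀ i * x₀ j := by
  unfold phess
  simp only [tst_fderiv]
  have h1 := (hasStrictFDerivAt_norm_sq x₀).hasFDerivAt
  have h2 : HasFDerivAt (fun x : Euc n => inner ℝ x (EuclideanSpace.single j (1:ℝ)))
      (innerSL ℝ (EuclideanSpace.single j (1:ℝ) : Euc n)) x₀ := by
    have := (innerSL ℝ (EuclideanSpace.single j (1:ℝ) : Euc n)).hasFDerivAt (x := x₀)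
    refine this.congr_of_eventuallyEq (Eventually.of_forall fun x => ?_)
    simp [real_inner_comm]
  have h3 := ((((h1.sub_const (‖x₀‖ ^ 2)).const_mul (2 * d)).const_add (2 * b)).mul h2).const_add
    (inner ℝ p (EuclideanSpace.single j (1:ℝ)))
  have h4 : HasFDerivAt (fun y : Euc n => inner ℝ p (EuclideanSpace.single j (1:ℝ)) +
    (2 * b + 2 * d * (‖y‖ ^ 2 - ‖x₀‖ ^ 2)) * inner ℝ y (EuclideanSpace.single j (1:ℝ))) _ x₀ := h3
  rw [h4.fderiv]
  simp [EuclideanSpace.inner_single_right]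
  ring

open Matrix in
lemma tst_form {n : ℕ} (p x₀ : Euc n) (a b d : ℝ) (y : Euc n) :
    y.ofLp ⬝ᵥ mobius (tst p x₀ a b d) x₀ *ᵥ y.ofLp =
      Real.exp (-2 * tst p x₀ a b d x₀) *
      (-2 * b * ‖y‖ ^ 2 - 4 * d * (inner ℝ x₀ y) ^ 2 + (inner ℝ p y + 2 * b * inner ℝ x₀ y) ^ 2
        - 1 / 2 * ‖p + (2 * b) • x₀‖ ^ 2 * ‖y‖ ^ 2) := by
  have e1 : ‖p + (2 * b) • x₀‖ ^ 2 = ∑ k, (p k + 2 * b * x₀ k) ^ 2 := by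
    rw [EuclideanSpace.real_norm_sq_eq]; simp
  have e2 : inner ℝ x₀ y = ∑ i, y i * x₀ i := by simp [PiLp.inner_apply]
  have e3 : inner ℝ p y + 2 * b * inner ℝ x₀ y = ∑ i, y i * (p i + 2 * b * x₀ i) := by
    simp only [PiLp.inner_apply, RCLike.inner_apply, conj_trivial, Finset.mul_sum,
      ← Finset.sum_add_distrib]
    exact Finset.sum_congr rfl fun i _ => by ring
  rw [e3, e1, e2, EuclideanSpace.real_norm_sq_eq y]
  unfold mobius
  rw [smul_mulVec, dotProduct_smul, smul_eq_mul]
  congr 1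
  simp only [tst_pgrad, tst_phess]
  clear e1
  generalize (∑ k, (p k + 2 * b * x₀ k) ^ 2) = S
  simp only [dotProduct, mulVec, of_apply]
  rw [sq (∑ i, y i * x₀ i), sq (∑ i, y i * (p i + 2 * b * x₀ i)), Finset.sum_mul_sum,
    Finset.sum_mul_sum, Finset.mul_sum, Finset.mul_sum, Finset.mul_sum, ← Finset.sum_sub_distrib,
    ← Finset.sum_add_distrib, ← Finset.sum_sub_distrib]
  refine Finset.sum_congr rfl fun i _ => ?_
  have : ∀ j, (-(2 * b * (if i = j then 1 else 0) + 4 * d * x₀ i * x₀ j) +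
      (p i + 2 * b * x₀ i) * (p j + 2 * b * x₀ j) - 1 / 2 * S * (if i = j then 1 else 0)) * y j =
      (-2 * b - 1 / 2 * S) * (if i = j then y j else 0) - 4 * d * x₀ i * (y j * x₀ j) +
      (p i + 2 * b * x₀ i) * (y j * (p j + 2 * b * x₀ j)) := by
    intro j
    split_ifs <;> ring
  simp only [this, Finset.sum_add_distrib, Finset.sum_sub_distrib, ← Finset.mul_sum,
    Finset.sum_ite_eq, Finset.mem_univ, if_true]
  ring

lemma tst_not_eigIn {n : ℕ} (hn : 0 < n) {Γ : Set (Fin n → ℝ)} (hΓ : CondC Γ) {θ : ℝ}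
    (hθ : 0 < θ) (hpert : pert n θ ∉ closure Γ) (p x₀ : Euc n) (hx₀ : x₀ ≠ 0)
    (a b d : ℝ) (hb : 0 < b) (h1 : ‖p‖ * ‖x₀‖ ≤ θ) (h2 : ‖p‖ ^ 2 ≤ 2 * θ * b)
    (h3 : -d * ‖x₀‖ ^ 2 ≤ (1 + θ) * b + θ * b ^ 2 * ‖x₀‖ ^ 2) :
    ¬ EigIn (mobius (tst p x₀ a b d) x₀) (closure Γ) := by
  have hr : 0 < ‖x₀‖ := norm_pos_iff.2 hx₀
  set r := ‖x₀‖ with hrdef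
  set E := Real.exp (-2 * tst p x₀ a b d x₀) with hE
  have hEpos : 0 < E := Real.exp_pos _
  apply not_eigIn hn hΓ hθ hpert (t := E * (b + b ^ 2 * r ^ 2)) (by positivity)
    (e := (r⁻¹ • x₀).ofLp)
  · have : ‖r⁻¹ • x₀‖ ^ 2 = 1 := by
      rw [norm_smul, norm_inv, Real.norm_of_nonneg hr.le, ← hrdef]; field_simp
    rw [EuclideanSpace.real_norm_sq_eq] at this
    rw [← this]
    simp [dotProduct, sq]
  · intro y
    have hf := tst_form p x₀ a b d (WithLp.toLp 2 y)
    set Y : Euc n := WithLp.toLp 2 y with hY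
    have hy : y = Y.ofLp := rfl
    have e1 : dotProduct y y = ‖Y‖ ^ 2 := by
      rw [EuclideanSpace.real_norm_sq_eq]; simp [dotProduct, hY, sq]
    have e2 : dotProduct (r⁻¹ • x₀).ofLp y = r⁻¹ * inner ℝ x₀ Y := by
      simp [dotProduct, hY, PiLp.inner_apply, Finset.mul_sum]
      exact Finset.sum_congr rfl fun i _ => by ring
    rw [e1, e2]
    rw [← hE] at hf
    refine (le_of_eq hf).trans ?_
    rw [mul_assoc E]
    refine mul_le_mul_of_nonneg_left ?_ hEpos.le
    have hxy := abs_le.1 (abs_real_inner_le_norm x₀ Y)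
    have hpy := abs_le.1 (abs_real_inner_le_norm p Y)
    have hpx := abs_le.1 (abs_real_inner_le_norm p x₀)
    have hprod : |inner ℝ p Y * inner ℝ x₀ Y| ≤ θ * ‖Y‖ ^ 2 := by
      rw [abs_mul]
      calc _ ≤ (‖p‖ * ‖Y‖) * (‖x₀‖ * ‖Y‖) := by
            gcongr
            · exact abs_real_inner_le_norm p Y
            · exact abs_real_inner_le_norm x₀ Y
        _ = (‖p‖ * r) * ‖Y‖ ^ 2 := by rw [hrdef]; ring
        _ ≤ _ := by gcongr
    have hprod' := (abs_le.1 hprod).2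
    have hsq : (inner ℝ p Y) ^ 2 ≤ ‖p‖ ^ 2 * ‖Y‖ ^ 2 := by
      rw [← mul_pow]; exact sq_le_sq' hpy.1 hpy.2
    have hnorm : ‖p + (2 * b) • x₀‖ ^ 2 =
        ‖p‖ ^ 2 + 4 * b * inner ℝ p x₀ + 4 * b ^ 2 * r ^ 2 := by
      rw [norm_add_sq_real, norm_smul, inner_smul_right, Real.norm_of_nonneg (by positivity)]
      ring
    rw [hnorm]
    set N := ‖Y‖ ^ 2 with hN
    have hN0 : 0 ≤ N := by positivity
    set X : ℝ := inner ℝ x₀ Y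
    set P : ℝ := inner ℝ p Y
    set q : ℝ := inner ℝ p x₀
    have hq : -q ≤ θ := by linarith [hpx.1]
    set z := r⁻¹ * X with hz
    have hX : X = r * z := by rw [hz]; field_simp
    have A1 : -4 * d * X ^ 2 ≤ (4 * (1 + θ) * b + 4 * θ * b ^ 2 * r ^ 2) * z ^ 2 := by
      rw [hX]
      nlinarith [mul_le_mul_of_nonneg_right h3 (sq_nonneg z)]
    have A2 : P ^ 2 ≤ 2 * θ * b * N := hsq.trans (by gcongr)
    have A3 : 4 * b * (P * X) ≤ 4 * b * (θ * N) := by gcongr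
    have A4 : -(2 * b * q) * N ≤ 2 * b * θ * N := by
      nlinarith [mul_le_mul_of_nonneg_right hq (mul_nonneg hb.le hN0)]
    have A5 : 4 * b ^ 2 * X ^ 2 = 4 * b ^ 2 * r ^ 2 * z ^ 2 := by rw [hX]; ring
    have A6 : 0 ≤ ‖p‖ ^ 2 * N := by positivity
    have A7 : 0 ≤ θ * (b ^ 2 * r ^ 2) * N := by positivity
    clear_value z X P q N E
    linarith

lemma exists_real_lower {n : ℕ} {K : Set (Euc n)} (hK : IsCompact K) {v : Euc n → EReal}
    (hlsc : LowerSemicontinuousOn v K) (hbot : ∀ x ∈ K, ⊥ < v x) :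
    ∃ m : ℝ, ∀ x ∈ K, (m : EReal) ≤ v x := by
  rcases K.eq_empty_or_nonempty with h | h
  · exact ⟨0, by simp [h]⟩
  · obtain ⟨x₀, hx₀, hmin⟩ := LowerSemicontinuousOn.exists_isMinOn h hK hlsc
    obtain ⟨m, -, hm⟩ := EReal.lt_iff_exists_real_btwn.1 (hbot x₀ hx₀)
    exact ⟨m, fun x hx => hm.le.trans (hmin hx)⟩

lemma comparison {n : ℕ} (hn : 0 < n) {Γ : Set (Fin n → ℝ)} (hΓ : CondC Γ) {θ : ℝ}
    (hθ : 0 < θ) (hpert : pert n θ ∉ closure Γ)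
    {v : Euc n → EReal} (hlsc : LowerSemicontinuousOn v (ball (0 : Euc n) 1 \ {0}))
    (hbot : ∀ x ∈ ball (0 : Euc n) 1 \ {0}, ⊥ < v x)
    (hsup : SupersolE Γ (ball (0 : Euc n) 1 \ {0}) v)
    (p : Euc n) {μ R c : ℝ} (hμ : 0 < μ) (hpμ : ‖p‖ ^ 2 ≤ 2 * θ * μ) (hR1 : R < 1)
    (hpR : ‖p‖ * R ≤ θ)
    (hbd : ∀ x : Euc n, ‖x‖ = R → ((c + inner ℝ p x + μ * R ^ 2 : ℝ) : EReal) ≤ v x) :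
    ∀ x : Euc n, 0 < ‖x‖ → ‖x‖ ≤ R → ((c + inner ℝ p x : ℝ) : EReal) ≤ v x := by
  intro x₁ hx₁ hx₁R
  by_contra! hcon
  set s₁ := ‖x₁‖ ^ 2 with hs₁
  have hs₁pos : 0 < s₁ := by positivity
  have hexp : Real.exp (-(θ * μ * s₁)) < 1 := by
    rw [Real.exp_lt_one_iff]; have : 0 < θ * μ * s₁ := by positivity
    linarith
  set ε := s₁ ^ θ * (1 - Real.exp (-(θ * μ * s₁))) with hε
  have hs₁θ : 0 < s₁ ^ θ := Real.rpow_pos_of_pos hs₁pos _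
  have hεpos : 0 < ε := mul_pos hs₁θ (by linarith)
  set φ : Euc n → ℝ := fun x => c + inner ℝ p x +
    (μ * ‖x‖ ^ 2 + (1 / θ) * Real.log (1 - ε * (‖x‖ ^ 2) ^ (-θ))) with hφ
  have hφ₁ : φ x₁ = c + inner ℝ p x₁ := by
    have e1 : ε * s₁ ^ (-θ) = 1 - Real.exp (-(θ * μ * s₁)) := by
      rw [hε, Real.rpow_neg hs₁pos.le]; field_simp
    simp only [hφ]
    rw [← hs₁, e1, sub_sub_cancel, Real.log_exp]
    field_simp
    ring
  have hcont : Continuous fun x : Euc n => (‖x‖ ^ 2) ^ θ := by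
    apply Continuous.rpow_const (by fun_prop)
    intro x; exact Or.inr hθ.le
  have hcpt : ∀ k : ℝ, IsCompact {x : Euc n | ‖x‖ ≤ R ∧ ε ≤ k * (‖x‖ ^ 2) ^ θ} := by
    intro k
    apply (isCompact_closedBall (0 : Euc n) R).of_isClosed_subset
    · exact (isClosed_le continuous_norm continuous_const).inter
        (isClosed_le continuous_const (continuous_const.mul hcont))
    · intro x hx; simpa using hx.1
  have hne : ∀ (k : ℝ) (x : Euc n), ε ≤ k * (‖x‖ ^ 2) ^ θ → x ≠ 0 := by
    rintro k x h rfl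
    rw [norm_zero, zero_pow two_ne_zero, Real.zero_rpow hθ.ne'] at h
    linarith
  have hsub : ∀ k : ℝ, {x : Euc n | ‖x‖ ≤ R ∧ ε ≤ k * (‖x‖ ^ 2) ^ θ} ⊆ ball (0 : Euc n) 1 \ {0} := by
    intro k x hx
    refine ⟨by simpa using hx.1.trans_lt hR1, hne k x hx.2⟩
  obtain ⟨m, hm⟩ := exists_real_lower (hcpt 1) (hlsc.mono (hsub 1))
    (fun x hx => hbot x (hsub 1 hx))
  set y₀ := min (Real.exp (-(θ * μ * s₁)))
    (Real.exp (θ * (m - 1 - c - ‖p‖ * R - μ * R ^ 2))) with hy₀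
  have hy₀pos : 0 < y₀ := lt_min (Real.exp_pos _) (Real.exp_pos _)
  have hy₀1 : y₀ < 1 := (min_le_left _ _).trans_lt hexp
  have hlogy₀ : Real.log y₀ ≤ θ * (m - 1 - c - ‖p‖ * R - μ * R ^ 2) := by
    rw [← Real.log_exp (θ * (m - 1 - c - ‖p‖ * R - μ * R ^ 2))]
    exact Real.log_le_log hy₀pos (min_le_right _ _)
  set K := {x : Euc n | ‖x‖ ≤ R ∧ ε ≤ (1 - y₀) * (‖x‖ ^ 2) ^ θ} with hK
  have hKy : ∀ x ∈ K, y₀ ≤ 1 - ε * (‖x‖ ^ 2) ^ (-θ) := by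
    intro x hx
    have hs : 0 < ‖x‖ ^ 2 := by have := norm_pos_iff.2 (hne _ x hx.2); positivity
    have h1 : 0 < (‖x‖ ^ 2) ^ θ := Real.rpow_pos_of_pos hs _
    rw [Real.rpow_neg hs.le, ← div_eq_mul_inv]
    have := (div_le_iff₀ h1).2 hx.2
    linarith
  have hx₁K : x₁ ∈ K := by
    refine ⟨hx₁R, ?_⟩
    rw [← hs₁, hε, mul_comm]
    have := min_le_left (Real.exp (-(θ * μ * s₁)))
      (Real.exp (θ * (m - 1 - c - ‖p‖ * R - μ * R ^ 2)))
    rw [← hy₀] at this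
    exact mul_le_mul_of_nonneg_right (by linarith) hs₁θ.le
  have hφc : ContinuousOn φ K := by
    intro x hx
    apply ContinuousAt.continuousWithinAt
    have hx0 := hne _ x hx.2
    have hs : ‖x‖ ^ 2 ≠ 0 := by have := norm_pos_iff.2 hx0; positivity
    have hy : 1 - ε * (‖x‖ ^ 2) ^ (-θ) ≠ 0 := (hy₀pos.trans_le (hKy x hx)).ne'
    have h1 : ContinuousAt (fun x : Euc n => ‖x‖ ^ 2) x := by fun_prop
    have h2 : ContinuousAt (fun x : Euc n => Real.log (1 - ε * (‖x‖ ^ 2) ^ (-θ))) x :=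
      (continuousAt_const.sub (continuousAt_const.mul (h1.rpow_const (Or.inl hs)))).log hy
    have h3 : ContinuousAt (fun x : Euc n => c + inner ℝ p x) x := by fun_prop
    exact h3.add ((continuousAt_const.mul h1).add (continuousAt_const.mul h2))
  have hlscf : LowerSemicontinuousOn (fun x => v x + ((-φ x : ℝ) : EReal)) K := by
    apply LowerSemicontinuousOn.add' (hlsc.mono (hsub _))
    · apply ContinuousOn.lowerSemicontinuousOn
      exact continuous_coe_real_ereal.comp_continuousOn hφc.neg
    · intro x hx
      exact EReal.continuousAt_add (Or.inr (EReal.coe_ne_bot _)) (Or.inr (EReal.coe_ne_top _))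
  obtain ⟨x₀, hx₀, hmin⟩ := LowerSemicontinuousOn.exists_isMinOn ⟨x₁, hx₁K⟩ (hcpt _) hlscf
  have hmin₁ : v x₀ + ((-φ x₀ : ℝ) : EReal) ≤ v x₁ + ((-φ x₁ : ℝ) : EReal) := hmin hx₁K
  have hv₁top : v x₁ ≠ ⊤ := (hcon.trans (EReal.coe_lt_top _)).ne
  have hv₁bot : v x₁ ≠ ⊥ := (hbot x₁ (hsub _ hx₁K)).ne'
  have hv₀bot : v x₀ ≠ ⊥ := (hbot x₀ (hsub _ hx₀)).ne'
  lift v x₁ to ℝ using ⟨hv₁top, hv₁bot⟩ with a₁ ha₁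
  have hv₀top : v x₀ ≠ ⊤ := by
    intro h
    rw [h, EReal.top_add_coe, ← EReal.coe_add] at hmin₁
    exact absurd hmin₁ (not_le.2 (EReal.coe_lt_top _))
  obtain ⟨a, ha⟩ : ∃ a : ℝ, (a : EReal) = v x₀ := ⟨(v x₀).toReal, EReal.coe_toReal hv₀top hv₀bot⟩
  have haφ : a < φ x₀ := by
    rw [← ha, ← EReal.coe_add, ← EReal.coe_add, EReal.coe_le_coe_iff] at hmin₁
    rw [EReal.coe_lt_coe_iff] at hcon
    linarith
  have htouch : ∀ x ∈ K, ((a - φ x₀ + φ x : ℝ) : EReal) ≤ v x := by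
    intro x hx
    have h1 : v x₀ + ((-φ x₀ : ℝ) : EReal) ≤ v x + ((-φ x : ℝ) : EReal) := hmin hx
    have hxbot : v x ≠ ⊥ := (hbot x (hsub _ hx)).ne'
    by_cases hxtop : v x = ⊤
    · rw [hxtop]; exact le_top
    · lift v x to ℝ using ⟨hxtop, hxbot⟩ with b hb
      rw [← ha, ← EReal.coe_add, ← EReal.coe_add, EReal.coe_le_coe_iff] at h1
      rw [EReal.coe_le_coe_iff]
      linarith
  have hx₀ne : x₀ ≠ 0 := hne _ x₀ hx₀.2
  have hr₀ : 0 < ‖x₀‖ := norm_pos_iff.2 hx₀ne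
  have hs₀ : 0 < ‖x₀‖ ^ 2 := by positivity
  have hs₀θ : 0 < (‖x₀‖ ^ 2) ^ (-θ) := Real.rpow_pos_of_pos hs₀ _
  have hy₀' := hy₀pos.trans_le (hKy x₀ hx₀)
  have hlt1 : ‖x₀‖ < R := by
    refine lt_of_le_of_ne hx₀.1 fun h => ?_
    have h1 := hbd x₀ h
    rw [← ha, EReal.coe_le_coe_iff] at h1
    have h2 : Real.log (1 - ε * (‖x₀‖ ^ 2) ^ (-θ)) ≤ 0 :=
      Real.log_nonpos hy₀'.le (by have := mul_pos hεpos hs₀θ; linarith)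
    have h3 : 1 / θ * Real.log (1 - ε * (‖x₀‖ ^ 2) ^ (-θ)) ≤ 0 :=
      mul_nonpos_of_nonneg_of_nonpos (by positivity) h2
    simp only [hφ] at haφ
    rw [← h] at h1
    linarith
  have hlt2 : ε < (1 - y₀) * (‖x₀‖ ^ 2) ^ θ := by
    refine lt_of_le_of_ne hx₀.2 fun h => ?_
    have e1 : 1 - ε * (‖x₀‖ ^ 2) ^ (-θ) = y₀ := by
      have : (‖x₀‖ ^ 2) ^ θ ≠ 0 := (Real.rpow_pos_of_pos hs₀ _).ne'
      rw [h, Real.rpow_neg hs₀.le]; field_simp; ring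
    have h1 := hm x₀ ⟨hx₀.1, by
      have : 0 < (‖x₀‖ ^ 2) ^ θ := Real.rpow_pos_of_pos hs₀ _
      have := mul_pos hy₀pos this
      linarith⟩
    rw [← ha, EReal.coe_le_coe_iff] at h1
    simp only [hφ] at haφ
    rw [e1] at haφ
    have h3 : 1 / θ * Real.log y₀ ≤ m - 1 - c - ‖p‖ * R - μ * R ^ 2 := by
      rw [one_div, inv_mul_le_iff₀ hθ]; exact hlogy₀
    have h4 : inner ℝ p x₀ ≤ ‖p‖ * R :=
      (real_inner_le_norm _ _).trans (mul_le_mul_of_nonneg_left hx₀.1 (norm_nonneg _))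
    have h5 : μ * ‖x₀‖ ^ 2 ≤ μ * R ^ 2 := by have := hx₀.1; gcongr
    linarith
  have hKnhds : ∀ᶠ x in 𝓝 x₀, x ∈ K := by
    have h1 : ∀ᶠ x in 𝓝 x₀, ‖x‖ < R := continuous_norm.continuousAt.eventually_lt_const hlt1
    have h2 : ∀ᶠ x in 𝓝 x₀, ε < (1 - y₀) * (‖x‖ ^ 2) ^ θ :=
      (continuous_const.mul hcont).continuousAt.eventually_const_lt hlt2
    filter_upwards [h1, h2] with x hx1 hx2 using ⟨hx1.le, hx2.le⟩
  obtain ⟨b, d, hb, hd, hq⟩ := one_dim hθ hμ hεpos hs₀ hy₀'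
  have hbpos : 0 < b := hμ.trans_le hb
  refine tst_not_eigIn hn hΓ hθ hpert p x₀ hx₀ne a b d hbpos
    ((mul_le_mul_of_nonneg_left hx₀.1 (norm_nonneg _)).trans hpR)
    (hpμ.trans (by gcongr)) hd
    (hsup x₀ (hsub _ hx₀) _ (tst_contDiff p x₀ a b d) ?_ ?_)
  · rw [← ha]; simp [tst]
  · apply Filter.Eventually.filter_mono nhdsWithin_le_nhds
    have hcn : ContinuousAt (fun x : Euc n => ‖x‖ ^ 2) x₀ := by fun_prop
    filter_upwards [hKnhds, hcn.eventually hq] with x hxK hxq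
    refine le_trans ?_ (htouch x hxK)
    rw [EReal.coe_le_coe_iff]
    simp only [tst, hφ, inner_sub_right]
    linarith

lemma le_liminf_aux {n : ℕ} {v : Euc n → EReal} {p : Euc n} {R c c' : ℝ} (hR : 0 < R)
    (h : ∀ x : Euc n, 0 < ‖x‖ → ‖x‖ ≤ R → ((c + inner ℝ p x : ℝ) : EReal) ≤ v x)
    (hc : c' < c) :
    (c' : EReal) ≤ liminf v (𝓝[ball (0 : Euc n) 1 \ {0}] (0 : Euc n)) := by
  apply le_liminf_of_le
  · isBoundedDefault
  have h1 : ∀ᶠ x : Euc n in 𝓝 0, ‖x‖ < R :=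
    continuous_norm.continuousAt.eventually_lt_const (by simpa using hR)
  have h2 : ∀ᶠ x : Euc n in 𝓝 0, c' < c + inner ℝ p x := by
    have : Continuous fun x : Euc n => c + inner ℝ p x := by fun_prop
    exact this.continuousAt.eventually_const_lt (by simpa using hc)
  filter_upwards [h1.filter_mono nhdsWithin_le_nhds, h2.filter_mono nhdsWithin_le_nhds,
    self_mem_nhdsWithin] with x hx1 hx2 hx3
  refine le_trans ?_ (h x (norm_pos_iff.2 hx3.2) hx1.le)
  exact EReal.coe_le_coe_iff.2 hx2.le

/-- **Criterion for lowerconical behaviour** (Proposition 4.4): for a cone `Γ` satisfying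
condition (C) with `λ* ∉ closure Γ`, any viscosity supersolution `v` of `λ(A[v]) ∈ ∂Γ` in
`B ∖ {0}` satisfies `liminf_{x→0} v > -∞`; moreover, after setting
`v(0) := liminf_{x→0} v` (possibly `+∞`), `v` is lower semi-continuous on `B` and
lowerconical at `0`. -/
theorem lowerconical_criterion
    {n : ℕ} (hn : 2 ≤ n) (Γ : Set (Fin n → ℝ)) (hΓ : CondC Γ)
    (hstar : lamStar n ∉ closure Γ)
    (B : Set (Euc n)) (hB : B = Metric.ball (0 : Euc n) 1)
    (v : Euc n → EReal) (hlsc : LowerSemicontinuousOn v (B \ {0}))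
    (hbot : ∀ x ∈ B \ {0}, ⊥ < v x) (hnetop : ∃ x ∈ B \ {0}, v x ≠ ⊤)
    (hsup : SupersolE Γ (B \ {0}) v)
    (w : Euc n → EReal)
    (hw : w = fun x => if x = (0 : Euc n) then Filter.liminf v (𝓝[B \ {0}] (0 : Euc n)) else v x) :
    ⊥ < Filter.liminf v (𝓝[B \ {0}] (0 : Euc n)) ∧
      LowerSemicontinuousOn w B ∧ LowerConical B w 0 := by
  have hn0 : 0 < n := by omega
  subst hB
  obtain ⟨θ, hθ, -, hpert⟩ := exists_theta hΓ hstar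
  set L := Filter.liminf v (𝓝[ball (0 : Euc n) 1 \ {0}] (0 : Euc n)) with hL
  have part1 : ⊥ < L := by
    have hsph : sphere (0 : Euc n) (1 / 2) ⊆ ball (0 : Euc n) 1 \ {0} := by
      intro x hx
      have hx' : ‖x‖ = 1 / 2 := by simpa using hx
      refine ⟨by simp [hx']; norm_num, ?_⟩
      rintro rfl
      simp at hx'
    obtain ⟨m, hm⟩ := exists_real_lower (isCompact_sphere (0 : Euc n) (1 / 2))
      (hlsc.mono hsph) (fun x hx => hbot x (hsph hx))
    have h1 := comparison hn0 hΓ hθ hpert hlsc hbot hsup 0 (μ := 1) (R := 1 / 2)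
      (c := m - 1) one_pos (by simp; positivity) (by norm_num) (by simp; positivity)
      (by
        intro x hx
        refine le_trans ?_ (hm x (by simpa using hx))
        rw [EReal.coe_le_coe_iff]
        simp
        norm_num
        linarith)
    exact (EReal.bot_lt_coe _).trans_le (le_liminf_aux (by norm_num) h1 (sub_one_lt (m - 1)))
  have hw0 : w 0 = L := by simp [hw]
  have hwv : ∀ x, x ≠ 0 → w x = v x := by intro x hx; simp [hw, hx]
  have hopen : IsOpen (ball (0 : Euc n) 1 \ {0}) := isOpen_ball.sdiff isClosed_singleton
  refine ⟨part1, ?_, ?_⟩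
  · intro x hx y hy
    by_cases hx0 : x = 0
    · subst hx0
      rw [hw0] at hy
      have h1 := eventually_lt_of_lt_liminf hy
      rw [eventually_nhdsWithin_iff] at h1 ⊢
      filter_upwards [h1] with z hz hzB
      by_cases hz0 : z = 0
      · rw [hz0, hw0]; exact hy
      · rw [hwv z hz0]; exact hz ⟨hzB, hz0⟩
    · rw [hwv x hx0] at hy
      have hxm : x ∈ ball (0 : Euc n) 1 \ {0} := ⟨hx, hx0⟩
      have h1 := hlsc x hxm y hy
      rw [hopen.nhdsWithin_eq hxm] at h1
      apply Filter.Eventually.filter_mono nhdsWithin_le_nhds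
      filter_upwards [h1, hopen.mem_nhds hxm] with z hz hzm
      rw [hwv z hzm.2]; exact hz
  · by_cases htop : w 0 = ⊤
    · exact Or.inl htop
    refine Or.inr ⟨htop, fun ε hε η hη => ?_⟩
    by_contra! hcon
    rw [hw0] at hcon htop
    obtain ⟨l, hl⟩ : ∃ l : ℝ, (l : EReal) = L := ⟨L.toReal, EReal.coe_toReal htop part1.ne'⟩
    set p : Euc n := gradient η 0 with hp
    have hdiff : DifferentiableAt ℝ η 0 := hη.contDiffAt.differentiableAt (by simp)
    have hlo := hdiff.hasFDerivAt.isLittleO.def (half_pos hε)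
    obtain ⟨R₁, hR₁, hball⟩ := Metric.eventually_nhds_iff.1 hlo
    set μ := (‖p‖ ^ 2 + 1) / (2 * θ) with hμdef
    have hμ : 0 < μ := by positivity
    set R := min (min (1 / 2) (R₁ / 2)) (min (θ / (‖p‖ + 1)) (ε / (4 * μ))) with hRdef
    have hR : 0 < R := by
      have := norm_nonneg p
      refine lt_min (lt_min (by norm_num) (by positivity)) (lt_min (by positivity) (by positivity))
    have hRa : R ≤ 1 / 2 := (min_le_left _ _).trans (min_le_left _ _)
    have hRb : R ≤ R₁ / 2 := (min_le_left _ _).trans (min_le_right _ _)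
    have hRc : R ≤ θ / (‖p‖ + 1) := (min_le_right _ _).trans (min_le_left _ _)
    have hRd : R ≤ ε / (4 * μ) := (min_le_right _ _).trans (min_le_right _ _)
    have hμR : μ * R ≤ ε / 4 := by
      rw [le_div_iff₀ (by positivity)] at hRd
      linarith
    have h1 := comparison hn0 hΓ hθ hpert hlsc hbot hsup p (μ := μ) (R := R)
      (c := l + ε / 4 * R) hμ
      (by rw [hμdef]; field_simp; linarith) (by linarith)
      (by
        have h := norm_nonneg p
        rw [le_div_iff₀ (by positivity)] at hRc
        linarith)
      (by
        intro x hx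
        have hx0 : x ≠ 0 := by rintro rfl; simp at hx; linarith
        have hxB : x ∈ ball (0 : Euc n) 1 := by simp [hx]; linarith
        have h2 := hcon x hxB
        rw [hwv x hx0, ← hl] at h2
        have h3 := hball (y := x) (by simp [hx]; linarith)
        rw [sub_zero, ← inner_gradient_left, ← hp, Real.norm_eq_abs, hx] at h3
        have h4 := (abs_le.1 h3).1
        have hxbot : v x ≠ ⊥ := (hbot x ⟨hxB, hx0⟩).ne'
        by_cases hxtop : v x = ⊤
        · rw [hxtop]; exact le_top
        · lift v x to ℝ using ⟨hxtop, hxbot⟩ with b hb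
          rw [← EReal.coe_sub, ← EReal.coe_sub, ← EReal.coe_add, EReal.coe_le_coe_iff, sub_zero,
            hx] at h2
          rw [EReal.coe_le_coe_iff]
          nlinarith)
    have h2 := le_liminf_aux (c' := l + ε / 8 * R) hR h1 (by nlinarith [mul_pos hε hR])
    rw [← hL, ← hl, EReal.coe_le_coe_iff] at h2
    nlinarith [mul_pos hε hR]
end
end
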